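/- arXiv:2102.10318 — 2 statements merged into one kernel-verified Lean document; each statement's English description precedes it below -/
import Mathlib

section
/- Let Y be a Banach space, A, B bounded linear operators on Y, 1 < α < 2, 0 < β < 1, and η, η̂ ∈ Y. Define x(t) = η + ( ∑_{k=0}^∞ ∑_{m=0}^∞ Q_{k,m}^{A,B} B · t^{k(α−β)+mα+α} / Γ(k(α−β)+mα+α+1) ) η + ( ∑_{k=0}^∞ ∑_{m=0}^∞ Q_{k,m}^{A,B} · t^{k(α−β)+mα+1} / Γ(k(α−β)+mα+2) ) η̂ for t ≥ 0. Then x(0) = η, x is differentiable with x′(0) = η̂, the Caputo fractional derivatives (ᶜD^{α}x)(t) and (ᶜD^{β}x)(t) exist for every t > 0, and x satisfies (ᶜD^{α}x)(t) − A(ᶜD^{β}x)(t) = B x(t) for all t > 0. -/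
/-!
To a power series `∑ z ^ e i • q i` with real exponents `e i ≥ 0`, absolutely convergent at some
`z > 0`, attach the Borel–Leroy transforms `t ↦ ∑ t ^ (e i + c) / Γ (e i + c + 1) • q i`. The growth
of `Γ` makes them converge for all `t ≥ 0`, and by Euler's beta integral fractional integration of
order `ρ` turns the shift `c` into `c + ρ`. For `ρ = 1` the fundamental theorem of calculus then
says that differentiation lowers `c` by one, so no series is ever differentiated term by term.

The solution is assembled from the transforms `E_c v` of the series
`∑ z ^ (k (α - β) + m α) • Q_{k,m} v`. Since `Q_{k+1,m+1} = A Q_{k,m+1} + B Q_{k+1,m}`, they satisfy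
`E_c v = t ^ c / Γ (c + 1) • v + A E_{c+α-β} v + B E_{c+α} v`. At `c = 1` and `v = η̂` this cancels
the term `t • η̂` before the Caputo derivative of order `α` is taken; at `c = 0` and `v = B η` it
yields the equation.
-/

open MeasureTheory

/-- The operators `Q_{k,m}^{A,B}` from the paper: `Q k 0 = A^k`, `Q 0 m = B^m`, and
`Q k m = ∑_{l=0}^{k} A^{k-l} B Q l (m-1)` for `m ≥ 1`. -/
noncomputable def Q {𝔸 : Type*} [Ring 𝔸] (A B : 𝔸) : ℕ → ℕ → 𝔸
  | k, 0 => A ^ k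
  | k, m + 1 => ∑ l ∈ Finset.range (k + 1), A ^ (k - l) * B * Q A B l m

open Set Filter Topology Real

section FractionalIntegral

/-- The monomial `t ^ c / Γ (c + 1)`, normalised so that fractional integration of order `ρ` shifts
`c` to `c + ρ`. -/
noncomputable def fracMonomial (c t : ℝ) : ℝ := t ^ c / Gamma (c + 1)

@[simp]
lemma fracMonomial_zero_left (t : ℝ) : fracMonomial 0 t = 1 := by simp [fracMonomial]

@[simp]
lemma fracMonomial_one_left (t : ℝ) : fracMonomial 1 t = t := by
  simp [fracMonomial, Gamma_add_one one_ne_zero]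

lemma fracMonomial_zero_right {c : ℝ} (hc : c ≠ 0) : fracMonomial c 0 = 0 := by
  simp [fracMonomial, zero_rpow hc]

lemma fracMonomial_nonneg {c t : ℝ} (hc : -1 ≤ c) (ht : 0 ≤ t) : 0 ≤ fracMonomial c t :=
  div_nonneg (rpow_nonneg ht c) (Gamma_nonneg_of_nonneg (by linarith))

lemma continuous_fracMonomial {c : ℝ} (hc : 0 ≤ c) : Continuous (fracMonomial c) :=
  (continuous_rpow_const hc).div_const _

-- Restrict Euler's integral to `(R, ∞)`, where `s ^ c ≥ R ^ c`.
lemma rpow_mul_exp_neg_le_Gamma_add_one {R c : ℝ} (hR : 0 ≤ R) (hc : 0 ≤ c) :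
    R ^ c * exp (-R) ≤ Gamma (c + 1) := by
  have hsub : Ioi R ⊆ Ioi 0 := Ioi_subset_Ioi hR
  have hint := GammaIntegral_convergent (s := c + 1) (by linarith)
  calc R ^ c * exp (-R) = ∫ s in Ioi R, R ^ c * exp (-s) := by
        rw [integral_const_mul, integral_exp_neg_Ioi]
    _ ≤ ∫ s in Ioi R, exp (-s) * s ^ (c + 1 - 1) := by
        refine setIntegral_mono_on ((integrableOn_exp_neg_Ioi R).const_mul _)
          (hint.mono_set hsub) measurableSet_Ioi fun s (hs : R < s) => ?_
        rw [mul_comm, add_sub_cancel_right]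
        gcongr
    _ ≤ ∫ s in Ioi 0, exp (-s) * s ^ (c + 1 - 1) := by
        refine setIntegral_mono_set hint ?_ (Eventually.of_forall hsub)
        filter_upwards [ae_restrict_mem measurableSet_Ioi] with s (hs : 0 < s)
        simp only [Pi.zero_apply]
        positivity
    _ = Gamma (c + 1) := (Gamma_eq_integral (by linarith)).symm

lemma fracMonomial_mul_le {R r c : ℝ} (hR : 0 ≤ R) (hr : 0 ≤ r) (hc : 0 ≤ c) :
    fracMonomial c (R * r) ≤ exp R * r ^ c := by
  have hΓ : 0 < Gamma (c + 1) := Gamma_pos_of_pos (by linarith)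
  rw [fracMonomial, div_le_iff₀ hΓ, mul_rpow hR hr]
  calc R ^ c * r ^ c = exp R * r ^ c * (R ^ c * exp (-R)) := by rw [exp_neg]; field_simp
    _ ≤ exp R * r ^ c * Gamma (c + 1) := by
        gcongr
        exact rpow_mul_exp_neg_le_Gamma_add_one hR hc

lemma fracMonomial_mono {c s t : ℝ} (hc : 0 ≤ c) (hs : 0 ≤ s) (hst : s ≤ t) :
    fracMonomial c s ≤ fracMonomial c t := by
  have hΓ : 0 ≤ Gamma (c + 1) := Gamma_nonneg_of_nonneg (by linarith)
  exact div_le_div_of_nonneg_right (rpow_le_rpow hs hst hc) hΓ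

lemma integral_rpow_mul_sub_rpow {u v t : ℝ} (hu : 0 < u) (hv : 0 < v) (ht : 0 < t) :
    ∫ s in (0 : ℝ)..t, s ^ (u - 1) * (t - s) ^ (v - 1) =
      t ^ (u + v - 1) * (Gamma u * Gamma v / Gamma (u + v)) := by
  have hcomplex := Complex.betaIntegral_scaled u v ht
  have hreal : ∫ s in (0 : ℝ)..t, (s : ℂ) ^ ((u : ℂ) - 1) * ((t : ℂ) - s) ^ ((v : ℂ) - 1) =
      ((∫ s in (0 : ℝ)..t, s ^ (u - 1) * (t - s) ^ (v - 1) : ℝ) : ℂ) := by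
    rw [← intervalIntegral.integral_ofReal]
    refine intervalIntegral.integral_congr fun s hs => ?_
    rw [uIcc_of_le ht.le] at hs
    push_cast [Complex.ofReal_cpow hs.1, Complex.ofReal_cpow (sub_nonneg.2 hs.2)]
    rfl
  rw [hreal, Complex.betaIntegral_eq_Gamma_mul_div _ _ (by simpa) (by simpa)] at hcomplex
  apply Complex.ofReal_injective
  push_cast [hcomplex, Complex.ofReal_cpow ht.le, ← Complex.Gamma_ofReal]
  rfl

variable {E F : Type*} [NormedAddCommGroup E] [NormedSpace ℝ E]
  [NormedAddCommGroup F] [NormedSpace ℝ F]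

/-- The Riemann–Liouville fractional integral of order `ρ > 0` with base point `0`. -/
noncomputable def riemannLiouville (ρ : ℝ) (f : ℝ → E) (t : ℝ) : E :=
  (Gamma ρ)⁻¹ • ∫ s in (0 : ℝ)..t, (t - s) ^ (ρ - 1) • f s

lemma riemannLiouville_congr {ρ : ℝ} {f g : ℝ → E} (hfg : EqOn f g (Ici 0)) :
    EqOn (riemannLiouville ρ f) (riemannLiouville ρ g) (Ici 0) := by
  intro t (ht : 0 ≤ t)
  unfold riemannLiouville
  congr 1
  refine intervalIntegral.integral_congr fun s hs => ?_
  rw [uIcc_of_le ht] at hs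
  simp only [hfg hs.1]

lemma intervalIntegrable_sub_rpow {ρ t : ℝ} (hρ : 0 < ρ) :
    IntervalIntegrable (fun s : ℝ => (t - s) ^ (ρ - 1)) volume 0 t := by
  have := (intervalIntegral.intervalIntegrable_rpow' (a := 0) (b := t) (r := ρ - 1)
    (by linarith)).comp_sub_left t
  simpa using this.symm

lemma intervalIntegrable_sub_rpow_smul {ρ t : ℝ} (hρ : 0 < ρ) (ht : 0 ≤ t) {f : ℝ → E}
    (hf : ContinuousOn f (Ici 0)) :
    IntervalIntegrable (fun s : ℝ => (t - s) ^ (ρ - 1) • f s) volume 0 t := by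
  refine (intervalIntegrable_sub_rpow hρ).smul_continuousOn (hf.mono ?_)
  rw [uIcc_of_le ht]
  exact Icc_subset_Ici_self

lemma riemannLiouville_add {ρ t : ℝ} (hρ : 0 < ρ) (ht : 0 ≤ t) {f g : ℝ → E}
    (hf : ContinuousOn f (Ici 0)) (hg : ContinuousOn g (Ici 0)) :
    riemannLiouville ρ (fun s => f s + g s) t =
      riemannLiouville ρ f t + riemannLiouville ρ g t := by
  simp only [riemannLiouville, smul_add]
  rw [intervalIntegral.integral_add (intervalIntegrable_sub_rpow_smul hρ ht hf)
    (intervalIntegrable_sub_rpow_smul hρ ht hg), smul_add]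

lemma riemannLiouville_map [CompleteSpace E] [CompleteSpace F] {ρ t : ℝ} (hρ : 0 < ρ)
    (ht : 0 ≤ t) (L : E →L[ℝ] F) {f : ℝ → E} (hf : ContinuousOn f (Ici 0)) :
    riemannLiouville ρ (fun s => L (f s)) t = L (riemannLiouville ρ f t) := by
  simp only [riemannLiouville, ← map_smul]
  rw [L.intervalIntegral_comp_comm (intervalIntegrable_sub_rpow_smul hρ ht hf), map_smul]

lemma riemannLiouville_fracMonomial_smul [CompleteSpace E] {ρ c t : ℝ} (hρ : 0 < ρ) (hc : 0 ≤ c)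
    (ht : 0 ≤ t) (v : E) :
    riemannLiouville ρ (fun s => fracMonomial c s • v) t = fracMonomial (c + ρ) t • v := by
  rcases ht.eq_or_lt with rfl | ht
  · simp [riemannLiouville, fracMonomial_zero_right (show c + ρ ≠ 0 by linarith)]
  have hbeta := integral_rpow_mul_sub_rpow (u := c + 1) (by linarith) hρ ht
  have hΓρ := (Gamma_pos_of_pos hρ).ne'
  have hΓc := (Gamma_pos_of_pos (show 0 < c + 1 by linarith)).ne'
  have hintegrand (s : ℝ) : (t - s) ^ (ρ - 1) * fracMonomial c s =
      (Gamma (c + 1))⁻¹ * (s ^ (c + 1 - 1) * (t - s) ^ (ρ - 1)) := by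
    rw [fracMonomial, add_sub_cancel_right]
    ring
  simp only [riemannLiouville, smul_smul, hintegrand]
  rw [intervalIntegral.integral_smul_const, intervalIntegral.integral_const_mul, hbeta, smul_smul,
    fracMonomial, add_right_comm c 1 ρ, add_sub_cancel_right]
  congr 1
  field_simp

lemma hasSum_riemannLiouville [CompleteSpace E] {ι : Type*} [Countable ι] {f : ι → ℝ → E}
    {u : ι → ℝ} {ρ t : ℝ} (hρ : 0 < ρ) (ht : 0 ≤ t) (hf : ∀ i, ContinuousOn (f i) (Ici 0))
    (hu : Summable u) (hfu : ∀ i, ∀ s ∈ Icc 0 t, ‖f i s‖ ≤ u i) :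
    HasSum (fun i => riemannLiouville ρ (f i) t) (riemannLiouville ρ (fun s => ∑' i, f i s) t) := by
  have hmem {s : ℝ} (hs : s ∈ uIoc 0 t) : s ∈ Icc 0 t := by
    rw [uIoc_of_le ht] at hs
    exact Ioc_subset_Icc_self hs
  refine (intervalIntegral.hasSum_integral_of_dominated_convergence
    (fun i s => (t - s) ^ (ρ - 1) * u i) (fun i => ?_) (fun i => ?_) ?_ ?_ ?_).const_smul _
  · rw [uIoc_of_le ht]
    exact (intervalIntegrable_sub_rpow_smul hρ ht (hf i)).aestronglyMeasurable
  · refine Eventually.of_forall fun s hs => ?_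
    have hkernel : 0 ≤ (t - s) ^ (ρ - 1) := rpow_nonneg (sub_nonneg.2 (hmem hs).2) _
    rw [norm_smul, norm_of_nonneg hkernel]
    exact mul_le_mul_of_nonneg_left (hfu i s (hmem hs)) hkernel
  · exact Eventually.of_forall fun s _ => hu.mul_left _
  · simp_rw [tsum_mul_left]
    exact (intervalIntegrable_sub_rpow hρ).mul_const _
  · exact Eventually.of_forall fun s hs =>
      (hu.of_norm_bounded fun i => hfu i s (hmem hs)).hasSum.const_smul _

lemma hasDerivWithinAt_riemannLiouville_one [CompleteSpace E] {f : ℝ → E} {t : ℝ} (ht : 0 ≤ t)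
    (hf : ContinuousOn f (Ici 0)) :
    HasDerivWithinAt (riemannLiouville 1 f) (f t) (Ici 0) t := by
  have hfIcc : ContinuousOn f (Icc 0 (t + 1)) := hf.mono Icc_subset_Ici_self
  have htIcc : t ∈ Icc 0 (t + 1) := ⟨ht, by linarith⟩
  have : Fact (t ∈ Icc 0 (t + 1)) := ⟨htIcc⟩
  have hRL : riemannLiouville 1 f = fun τ => ∫ s in (0 : ℝ)..τ, f s := by
    ext τ
    simp [riemannLiouville]
  rw [hRL]
  refine (intervalIntegral.integral_hasDerivWithinAt_right (s := Icc 0 (t + 1))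
    ((hf.mono ?_).intervalIntegrable) ?_ (hfIcc t htIcc)).mono_of_mem_nhdsWithin ?_
  · rw [uIcc_of_le ht]
    exact Icc_subset_Ici_self
  · exact hfIcc.stronglyMeasurableAtFilter_nhdsWithin measurableSet_Icc t
  · rw [← Ici_inter_Iic]
    exact inter_mem_nhdsWithin _ (Iic_mem_nhds (lt_add_one t))

end FractionalIntegral

section BorelTransform

variable {ι E F : Type*} [NormedAddCommGroup E] [NormedSpace ℝ E]
  [NormedAddCommGroup F] [NormedSpace ℝ F]

/-- The generalised power series `∑ i, z ^ e i • q i` has non-negative exponents and converges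
absolutely at some `z = r > 0`. -/
def HasPosRadius (e : ι → ℝ) (q : ι → E) : Prop :=
  (∀ i, 0 ≤ e i) ∧ ∃ r > 0, Summable fun i => r ^ e i * ‖q i‖

/-- The Borel–Leroy transform `∑ i, t ^ (e i + c) / Γ (e i + c + 1) • q i`, with shift `c`, of the
generalised power series `∑ i, z ^ e i • q i`. -/
noncomputable def borelTransform (e : ι → ℝ) (q : ι → E) (c t : ℝ) : E :=
  ∑' i, fracMonomial (e i + c) t • q i

namespace HasPosRadius

variable {e : ι → ℝ} {q : ι → E} {c t : ℝ}

lemma map (h : HasPosRadius e q) (L : E →L[ℝ] F) : HasPosRadius e fun i => L (q i) := by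
  obtain ⟨he, r, hr, hq⟩ := h
  refine ⟨he, r, hr, (hq.mul_left ‖L‖).of_nonneg_of_le (fun i => by positivity) fun i => ?_⟩
  calc r ^ e i * ‖L (q i)‖ ≤ r ^ e i * (‖L‖ * ‖q i‖) := by gcongr; exact L.le_opNorm _
    _ = ‖L‖ * (r ^ e i * ‖q i‖) := by ring

-- `fracMonomial_mul_le` with `R = T / r` compares the terms on `[0, T]` with those of the power
-- series at `r`.
lemma exists_summable_bound (h : HasPosRadius e q) (hc : 0 ≤ c) {T : ℝ} (hT : 0 ≤ T) :
    ∃ u : ι → ℝ, Summable u ∧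
      ∀ i, ∀ t ∈ Icc 0 T, ‖fracMonomial (e i + c) t • q i‖ ≤ u i := by
  obtain ⟨he, r, hr, hq⟩ := h
  refine ⟨_, hq.mul_left (exp (T / r) * r ^ c), fun i t ht => ?_⟩
  have hec : 0 ≤ e i + c := add_nonneg (he i) hc
  calc ‖fracMonomial (e i + c) t • q i‖ = fracMonomial (e i + c) t * ‖q i‖ := by
        rw [norm_smul, norm_of_nonneg (fracMonomial_nonneg (by linarith) ht.1)]
    _ ≤ fracMonomial (e i + c) (T / r * r) * ‖q i‖ := by
        gcongr
        rw [div_mul_cancel₀ T hr.ne']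
        exact fracMonomial_mono hec ht.1 ht.2
    _ ≤ exp (T / r) * r ^ (e i + c) * ‖q i‖ := by
        gcongr
        exact fracMonomial_mul_le (by positivity) hr.le hec
    _ = exp (T / r) * r ^ c * (r ^ e i * ‖q i‖) := by rw [rpow_add hr]; ring

lemma borelTransform_zero_right (h : HasPosRadius e q) (hc : 0 < c) :
    borelTransform e q c 0 = 0 := by
  have hterm (i : ι) : fracMonomial (e i + c) 0 • q i = 0 := by
    rw [fracMonomial_zero_right (add_pos_of_nonneg_of_pos (h.1 i) hc).ne', zero_smul]
  simp only [borelTransform, hterm, tsum_zero]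

variable [CompleteSpace E]

lemma hasSum_borelTransform (h : HasPosRadius e q) (hc : 0 ≤ c) (ht : 0 ≤ t) :
    HasSum (fun i => fracMonomial (e i + c) t • q i) (borelTransform e q c t) := by
  obtain ⟨u, hu, hbound⟩ := h.exists_summable_bound hc ht
  exact (hu.of_norm_bounded fun i => hbound i t (right_mem_Icc.2 ht)).hasSum

lemma continuousOn_borelTransform (h : HasPosRadius e q) (hc : 0 ≤ c) :
    ContinuousOn (borelTransform e q c) (Ici 0) := by
  intro t ht
  have ht' : 0 ≤ t + 1 := add_nonneg ht zero_le_one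
  obtain ⟨u, hu, hbound⟩ := h.exists_summable_bound hc ht'
  have hIcc : ContinuousOn (borelTransform e q c) (Icc 0 (t + 1)) :=
    continuousOn_tsum (fun i => ((continuous_fracMonomial (add_nonneg (h.1 i) hc)).smul
      continuous_const).continuousOn) hu hbound
  refine (hIcc t ⟨ht, (lt_add_one t).le⟩).mono_of_mem_nhdsWithin ?_
  rw [← Ici_inter_Iic]
  exact inter_mem_nhdsWithin _ (Iic_mem_nhds (lt_add_one t))

variable [Countable ι]

lemma riemannLiouville_borelTransform (h : HasPosRadius e q) (hc : 0 ≤ c) {ρ : ℝ} (hρ : 0 < ρ)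
    (ht : 0 ≤ t) :
    riemannLiouville ρ (borelTransform e q c) t = borelTransform e q (c + ρ) t := by
  obtain ⟨u, hu, hbound⟩ := h.exists_summable_bound hc ht
  have hec (i : ι) : 0 ≤ e i + c := add_nonneg (h.1 i) hc
  have hcont (i : ι) : ContinuousOn (fun s => fracMonomial (e i + c) s • q i) (Ici 0) :=
    ((continuous_fracMonomial (hec i)).smul continuous_const).continuousOn
  refine (hasSum_riemannLiouville hρ ht hcont hu hbound).tsum_eq.symm.trans
    (tsum_congr fun i => ?_)
  rw [riemannLiouville_fracMonomial_smul hρ (hec i) ht, add_assoc]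

lemma hasDerivWithinAt_borelTransform_add_one (h : HasPosRadius e q) (hc : 0 ≤ c) (ht : 0 ≤ t) :
    HasDerivWithinAt (borelTransform e q (c + 1)) (borelTransform e q c t) (Ici 0) t :=
  (hasDerivWithinAt_riemannLiouville_one ht (h.continuousOn_borelTransform hc)).congr_of_mem
    (fun _ hs => (h.riemannLiouville_borelTransform hc one_pos hs).symm) ht

end HasPosRadius

end BorelTransform

section OperatorCoefficients

section Ring

variable {𝔸 : Type*} [Ring 𝔸] (A B : 𝔸)

lemma Q_zero_zero : Q A B 0 0 = 1 := by simp [Q]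

lemma Q_zero_succ (m : ℕ) : Q A B 0 (m + 1) = B * Q A B 0 m := by simp [Q]

lemma Q_succ_zero (k : ℕ) : Q A B (k + 1) 0 = A * Q A B k 0 := by simp [Q, pow_succ']

lemma Q_succ_succ (k m : ℕ) :
    Q A B (k + 1) (m + 1) = A * Q A B k (m + 1) + B * Q A B (k + 1) m := by
  rw [Q, Finset.sum_range_succ, Q, Finset.mul_sum, Nat.sub_self, pow_zero, one_mul]
  congr 1
  refine Finset.sum_congr rfl fun l hl => ?_
  rw [Nat.sub_add_comm (Finset.mem_range_succ_iff.1 hl), pow_succ']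
  simp only [mul_assoc]

end Ring

lemma norm_Q_le {𝔸 : Type*} [NormedRing 𝔸] (A B : 𝔸) :
    ∀ k m : ℕ, ‖Q A B k m‖ ≤ ‖(1 : 𝔸)‖ * (‖A‖ + ‖B‖) ^ (k + m)
  | 0, 0 => by simp [Q_zero_zero]
  | k + 1, 0 => by
    have ih := norm_Q_le A B k 0
    calc ‖Q A B (k + 1) 0‖ ≤ ‖A‖ * ‖Q A B k 0‖ := by rw [Q_succ_zero]; exact norm_mul_le _ _
      _ ≤ (‖A‖ + ‖B‖) * (‖(1 : 𝔸)‖ * (‖A‖ + ‖B‖) ^ (k + 0)) := by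
        gcongr
        exact le_add_of_nonneg_right (norm_nonneg B)
      _ = ‖(1 : 𝔸)‖ * (‖A‖ + ‖B‖) ^ (k + 1 + 0) := by ring
  | 0, m + 1 => by
    have ih := norm_Q_le A B 0 m
    calc ‖Q A B 0 (m + 1)‖ ≤ ‖B‖ * ‖Q A B 0 m‖ := by rw [Q_zero_succ]; exact norm_mul_le _ _
      _ ≤ (‖A‖ + ‖B‖) * (‖(1 : 𝔸)‖ * (‖A‖ + ‖B‖) ^ (0 + m)) := by
        gcongr
        exact le_add_of_nonneg_left (norm_nonneg A)
      _ = ‖(1 : 𝔸)‖ * (‖A‖ + ‖B‖) ^ (0 + (m + 1)) := by ring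
  | k + 1, m + 1 => by
    have ihA := norm_Q_le A B k (m + 1)
    have ihB := norm_Q_le A B (k + 1) m
    calc ‖Q A B (k + 1) (m + 1)‖ ≤ ‖A‖ * ‖Q A B k (m + 1)‖ + ‖B‖ * ‖Q A B (k + 1) m‖ := by
          rw [Q_succ_succ]
          exact norm_add_le_of_le (norm_mul_le _ _) (norm_mul_le _ _)
      _ ≤ ‖A‖ * (‖(1 : 𝔸)‖ * (‖A‖ + ‖B‖) ^ (k + (m + 1))) +
            ‖B‖ * (‖(1 : 𝔸)‖ * (‖A‖ + ‖B‖) ^ (k + 1 + m)) := by gcongr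
      _ = ‖(1 : 𝔸)‖ * (‖A‖ + ‖B‖) ^ (k + 1 + (m + 1)) := by ring

lemma exists_pos_mul_rpow_lt_one (C : ℝ) {a b : ℝ} (ha : 0 < a) (hb : 0 < b) :
    ∃ r > 0, C * r ^ a < 1 ∧ C * r ^ b < 1 := by
  have hsmall {a : ℝ} (ha : 0 < a) : ∀ᶠ r in 𝓝[>] (0 : ℝ), C * r ^ a < 1 := by
    have hcont : Continuous fun r : ℝ => C * r ^ a := (continuous_rpow_const ha.le).const_mul C
    refine nhdsWithin_le_nhds (hcont.tendsto 0 (Iio_mem_nhds ?_))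
    simp [zero_rpow ha.ne']
  obtain ⟨r, hr, hra, hrb⟩ := (eventually_mem_nhdsWithin.and ((hsmall ha).and (hsmall hb))).exists
  exact ⟨r, hr, hra, hrb⟩

lemma hasPosRadius_Q {𝔸 : Type*} [NormedRing 𝔸] (A B : 𝔸) {a b : ℝ} (ha : 0 < a) (hb : 0 < b) :
    HasPosRadius (fun p : ℕ × ℕ => p.1 * a + p.2 * b) fun p => Q A B p.1 p.2 := by
  set C := ‖A‖ + ‖B‖
  obtain ⟨r, hr, hra, hrb⟩ := exists_pos_mul_rpow_lt_one C ha hb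
  have hgeom : Summable fun p : ℕ × ℕ => (C * r ^ a) ^ p.1 * (C * r ^ b) ^ p.2 :=
    (summable_geometric_of_lt_one (by positivity) hra).mul_of_nonneg
      (summable_geometric_of_lt_one (by positivity) hrb) (fun _ => by positivity)
      fun _ => by positivity
  refine ⟨fun p => by positivity, r, hr, (hgeom.mul_left ‖(1 : 𝔸)‖).of_nonneg_of_le
    (fun p => by positivity) fun ⟨k, m⟩ => ?_⟩
  calc r ^ (k * a + m * b) * ‖Q A B k m‖ ≤ r ^ (k * a + m * b) * (‖(1 : 𝔸)‖ * C ^ (k + m)) := by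
        gcongr
        exact norm_Q_le A B k m
    _ = ‖(1 : 𝔸)‖ * ((C * r ^ a) ^ k * (C * r ^ b) ^ m) := by
        rw [rpow_add hr, mul_comm (k : ℝ), mul_comm (m : ℝ), rpow_mul_natCast hr.le,
          rpow_mul_natCast hr.le, mul_pow, mul_pow, pow_add]
        ring

lemma hasSum_of_pascal_rec {M : Type*} [AddCommMonoid M] [TopologicalSpace M] [ContinuousAdd M]
    {f g₁ g₂ : ℕ × ℕ → M} {x s₁ s₂ : M} (hg₁ : HasSum g₁ s₁) (hg₂ : HasSum g₂ s₂)
    (hf₀ : f (0, 0) = x) (hf₁ : ∀ k, f (k + 1, 0) = g₁ (k, 0)) (hf₂ : ∀ m, f (0, m + 1) = g₂ (0, m))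
    (hf : ∀ k m, f (k + 1, m + 1) = g₁ (k, m + 1) + g₂ (k + 1, m)) :
    HasSum f (x + s₁ + s₂) := by
  let shift₁ : ℕ × ℕ → M
    | (0, _) => 0
    | (k + 1, m) => g₁ (k, m)
  let shift₂ : ℕ × ℕ → M
    | (_, 0) => 0
    | (k, m + 1) => g₂ (k, m)
  have hshift₁ : HasSum shift₁ s₁ := by
    refine (Function.Injective.hasSum_iff (g := Prod.map Nat.succ id)
      (Nat.succ_injective.prodMap Function.injective_id) ?_).1 hg₁
    rintro ⟨_ | k, m⟩ hp
    exacts [rfl, absurd ⟨(k, m), rfl⟩ hp]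
  have hshift₂ : HasSum shift₂ s₂ := by
    refine (Function.Injective.hasSum_iff (g := Prod.map id Nat.succ)
      (Function.injective_id.prodMap Nat.succ_injective) ?_).1 hg₂
    rintro ⟨k, _ | m⟩ hp
    exacts [rfl, absurd ⟨(k, m), rfl⟩ hp]
  convert ((hasSum_ite_eq (0, 0) x).add hshift₁).add hshift₂ using 1
  ext ⟨_ | k, _ | m⟩ <;> simp [shift₁, shift₂, hf₀, hf₁, hf₂, hf]

end OperatorCoefficients

section MittagLeffler

variable {Y : Type*} [NormedAddCommGroup Y] [NormedSpace ℝ Y] (A B : Y →L[ℝ] Y) {a b c t : ℝ}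
  (v : Y)

/-- The bivariate Mittag-Leffler type function
`∑ k m, t ^ (k a + m b + c) / Γ (k a + m b + c + 1) • Q_{k,m} v`. -/
noncomputable def mittagLeffler (a b : ℝ) (v : Y) : ℝ → ℝ → Y :=
  borelTransform (fun p : ℕ × ℕ => p.1 * a + p.2 * b) fun p => Q A B p.1 p.2 v

lemma hasPosRadius_Q_apply (ha : 0 < a) (hb : 0 < b) :
    HasPosRadius (fun p : ℕ × ℕ => p.1 * a + p.2 * b) fun p => Q A B p.1 p.2 v :=
  (hasPosRadius_Q A B ha hb).map (ContinuousLinearMap.apply ℝ Y v)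

lemma mittagLeffler_zero_right (ha : 0 < a) (hb : 0 < b) (hc : 0 < c) :
    mittagLeffler A B a b v c 0 = 0 :=
  (hasPosRadius_Q_apply A B v ha hb).borelTransform_zero_right hc

variable [CompleteSpace Y]

lemma continuousOn_mittagLeffler (ha : 0 < a) (hb : 0 < b) (hc : 0 ≤ c) :
    ContinuousOn (mittagLeffler A B a b v c) (Ici 0) :=
  (hasPosRadius_Q_apply A B v ha hb).continuousOn_borelTransform hc

lemma riemannLiouville_mittagLeffler (ha : 0 < a) (hb : 0 < b) (hc : 0 ≤ c) {ρ : ℝ} (hρ : 0 < ρ)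
    (ht : 0 ≤ t) :
    riemannLiouville ρ (mittagLeffler A B a b v c) t = mittagLeffler A B a b v (c + ρ) t :=
  (hasPosRadius_Q_apply A B v ha hb).riemannLiouville_borelTransform hc hρ ht

lemma hasDerivWithinAt_mittagLeffler (ha : 0 < a) (hb : 0 < b) (hc : 1 ≤ c) (ht : 0 ≤ t) :
    HasDerivWithinAt (mittagLeffler A B a b v c) (mittagLeffler A B a b v (c - 1) t) (Ici 0) t := by
  have h := (hasPosRadius_Q_apply A B v ha hb).hasDerivWithinAt_borelTransform_add_one
    (sub_nonneg.2 hc) ht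
  rwa [sub_add_cancel] at h

lemma mittagLeffler_eq (ha : 0 < a) (hb : 0 < b) (hc : 0 ≤ c) (ht : 0 ≤ t) :
    mittagLeffler A B a b v c t = fracMonomial c t • v +
      A (mittagLeffler A B a b v (c + a) t) + B (mittagLeffler A B a b v (c + b) t) := by
  have hQ := hasPosRadius_Q_apply A B v ha hb
  have hA := (hQ.hasSum_borelTransform (c := c + a) (by linarith) ht).mapL A
  have hB := (hQ.hasSum_borelTransform (c := c + b) (by linarith) ht).mapL B
  have hexp₁ (k m : ℕ) : ((k + 1 : ℕ) : ℝ) * a + m * b + c = k * a + m * b + (c + a) := by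
    push_cast; ring
  have hexp₂ (k m : ℕ) : (k : ℝ) * a + (m + 1 : ℕ) * b + c = k * a + m * b + (c + b) := by
    push_cast; ring
  refine (hasSum_of_pascal_rec hA hB ?_ (fun k => ?_) (fun m => ?_) fun k m => ?_).tsum_eq <;>
    dsimp only
  · simp [Q_zero_zero]
  · rw [hexp₁, Q_succ_zero, mul_apply_eq_comp, map_smul]
  · rw [hexp₂, Q_zero_succ, mul_apply_eq_comp, map_smul]
  · rw [map_smul, map_smul, ← hexp₁, ← hexp₂, ← smul_add, Q_succ_succ]
    rfl

end MittagLeffler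

section MildSolution

variable {Y : Type*} [NormedAddCommGroup Y] [NormedSpace ℝ Y] (A B : Y →L[ℝ] Y) {α β t : ℝ}
  (η ηh : Y)

/-- The mild solution of `ᶜD^α x - A ᶜD^β x = B x` with `x 0 = η` and `x' 0 = ηh`. -/
noncomputable def mildSolution (α β : ℝ) (η ηh : Y) (t : ℝ) : Y :=
  η + mittagLeffler A B (α - β) α (B η) α t + mittagLeffler A B (α - β) α ηh 1 t

lemma mildSolution_zero (hα : 0 < α) (hβα : β < α) : mildSolution A B α β η ηh 0 = η := by
  have hβα' := sub_pos.2 hβα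
  simp [mildSolution, mittagLeffler_zero_right A B _ hβα' hα, hα]

variable [CompleteSpace Y]

lemma hasDerivWithinAt_mildSolution_zero (hα : 1 < α) (hβα : β < α) :
    HasDerivWithinAt (mildSolution A B α β η ηh) ηh (Ici 0) 0 := by
  have hα0 : 0 < α := one_pos.trans hα
  have hβα' := sub_pos.2 hβα
  have hη := hasDerivWithinAt_mittagLeffler A B (B η) hβα' hα0 hα.le le_rfl
  have hηh := hasDerivWithinAt_mittagLeffler A B ηh hβα' hα0 le_rfl le_rfl
  rw [mittagLeffler_zero_right A B (B η) hβα' hα0 (sub_pos.2 hα)] at hη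
  rw [sub_self, mittagLeffler_eq A B ηh hβα' hα0 le_rfl le_rfl, zero_add, zero_add,
    mittagLeffler_zero_right A B ηh hβα' hα0 hβα', mittagLeffler_zero_right A B ηh hβα' hα0 hα0]
    at hηh
  simpa [mildSolution] using! (hη.const_add η).add hηh

lemma riemannLiouville_mildSolution_sub (hα : 0 < α) (hβα : β < α) (hβ : β < 1) (ht : 0 ≤ t) :
    riemannLiouville (1 - β) (fun s => mildSolution A B α β η ηh s - η) t =
      mittagLeffler A B (α - β) α (B η) (α - β + 1) t +
        mittagLeffler A B (α - β) α ηh (1 - β + 1) t := by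
  have hβα' := sub_pos.2 hβα
  have hβ' := sub_pos.2 hβ
  simp only [mildSolution, add_assoc, add_sub_cancel_left]
  rw [riemannLiouville_add hβ' ht (continuousOn_mittagLeffler A B _ hβα' hα hα.le)
      (continuousOn_mittagLeffler A B _ hβα' hα zero_le_one),
    riemannLiouville_mittagLeffler A B _ hβα' hα hα.le hβ' ht,
    riemannLiouville_mittagLeffler A B _ hβα' hα zero_le_one hβ' ht]
  congr 2 <;> ring

lemma hasDerivWithinAt_riemannLiouville_mildSolution_sub (hα : 0 < α) (hβα : β < α) (hβ : β < 1)
    (ht : 0 ≤ t) :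
    HasDerivWithinAt (riemannLiouville (1 - β) fun s => mildSolution A B α β η ηh s - η)
      (mittagLeffler A B (α - β) α (B η) (α - β) t + mittagLeffler A B (α - β) α ηh (1 - β) t)
      (Ici 0) t := by
  have hβα' := sub_pos.2 hβα
  have hη_deriv := hasDerivWithinAt_mittagLeffler A B (B η) (c := α - β + 1) hβα' hα
    (by linarith) ht
  have hηh_deriv := hasDerivWithinAt_mittagLeffler A B ηh (c := 1 - β + 1) hβα' hα
    (by linarith) ht
  rw [add_sub_cancel_right] at hη_deriv hηh_deriv
  exact (hη_deriv.add hηh_deriv).congr_of_mem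
    (fun s hs => riemannLiouville_mildSolution_sub A B η ηh hα hβα hβ hs) ht

-- The recursion for the `ηh`-series exposes the term `t • ηh`, so that no singular power of `t`
-- survives in the Caputo derivative of order `α > 1`.
lemma mildSolution_sub_sub (hα : 0 < α) (hβα : β < α) (ht : 0 ≤ t) :
    mildSolution A B α β η ηh t - η - t • ηh =
      mittagLeffler A B (α - β) α (B η) α t +
        A (mittagLeffler A B (α - β) α ηh (1 + (α - β)) t) +
          B (mittagLeffler A B (α - β) α ηh (1 + α) t) := by
  rw [mildSolution, mittagLeffler_eq A B ηh (sub_pos.2 hβα) hα zero_le_one ht,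
    fracMonomial_one_left]
  abel

/-- The fractional integral of order `c` of the Caputo derivative of order `α` of the mild solution.
For `c = 2` it is the integral that the definition of that derivative differentiates twice, and for
`c = 0` it is the derivative itself. -/
noncomputable def caputoIntegral (α β : ℝ) (η ηh : Y) (c t : ℝ) : Y :=
  mittagLeffler A B (α - β) α (B η) c t + A (mittagLeffler A B (α - β) α ηh (c + 1 - β) t) +
    B (mittagLeffler A B (α - β) α ηh (c + 1) t)

lemma riemannLiouville_mildSolution_sub_sub (hα : 0 < α) (hα2 : α < 2) (hβα : β < α)
    (ht : 0 ≤ t) :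
    riemannLiouville (2 - α) (fun s => mildSolution A B α β η ηh s - η - s • ηh) t =
      caputoIntegral A B α β η ηh 2 t := by
  have hβα' := sub_pos.2 hβα
  have hα2' := sub_pos.2 hα2
  have hcA : 0 ≤ 1 + (α - β) := by linarith
  have hcB : 0 ≤ 1 + α := by linarith
  have hη := continuousOn_mittagLeffler A B (B η) hβα' hα hα.le
  have hηA := continuousOn_mittagLeffler A B ηh hβα' hα hcA
  have hηB := continuousOn_mittagLeffler A B ηh hβα' hα hcB
  have hAcont :
      ContinuousOn (fun s => A (mittagLeffler A B (α - β) α ηh (1 + (α - β)) s)) (Ici 0) :=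
    A.continuous.comp_continuousOn hηA
  have hBcont : ContinuousOn (fun s => B (mittagLeffler A B (α - β) α ηh (1 + α) s)) (Ici 0) :=
    B.continuous.comp_continuousOn hηB
  rw [riemannLiouville_congr (fun s hs => mildSolution_sub_sub A B η ηh hα hβα hs) ht,
    riemannLiouville_add hα2' ht (hη.fun_add hAcont) hBcont,
    riemannLiouville_add hα2' ht hη hAcont, riemannLiouville_map hα2' ht A hηA,
    riemannLiouville_map hα2' ht B hηB, riemannLiouville_mittagLeffler A B _ hβα' hα hα.le hα2' ht,
    riemannLiouville_mittagLeffler A B _ hβα' hα hcA hα2' ht,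
    riemannLiouville_mittagLeffler A B _ hβα' hα hcB hα2' ht, caputoIntegral]
  ring_nf

lemma hasDerivWithinAt_caputoIntegral (hα : 0 < α) (hβα : β < α) (hβ : β < 1) {c : ℝ} (hc : 1 ≤ c)
    (ht : 0 ≤ t) :
    HasDerivWithinAt (caputoIntegral A B α β η ηh c) (caputoIntegral A B α β η ηh (c - 1) t)
      (Ici 0) t := by
  have hβα' := sub_pos.2 hβα
  have hη := hasDerivWithinAt_mittagLeffler A B (B η) hβα' hα hc ht
  have hηA := hasDerivWithinAt_mittagLeffler A B ηh (c := c + 1 - β) hβα' hα (by linarith) ht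
  have hηB := hasDerivWithinAt_mittagLeffler A B ηh (c := c + 1) hβα' hα (by linarith) ht
  rw [show c + 1 - β - 1 = c - 1 + 1 - β by ring] at hηA
  rw [show c + 1 - 1 = c - 1 + 1 by ring] at hηB
  exact (hη.add (A.hasFDerivAt.comp_hasDerivWithinAt t hηA)).add
    (B.hasFDerivAt.comp_hasDerivWithinAt t hηB)

lemma hasDerivWithinAt_riemannLiouville_mildSolution_sub_sub (hα : 0 < α) (hα2 : α < 2)
    (hβα : β < α) (hβ : β < 1) (ht : 0 ≤ t) :
    HasDerivWithinAt (riemannLiouville (2 - α) fun s => mildSolution A B α β η ηh s - η - s • ηh)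
      (caputoIntegral A B α β η ηh 1 t) (Ici 0) t := by
  have hderiv := hasDerivWithinAt_caputoIntegral A B η ηh hα hβα hβ one_le_two ht
  rw [show (2 - 1 : ℝ) = 1 by norm_num] at hderiv
  exact hderiv.congr_of_mem
    (fun s hs => riemannLiouville_mildSolution_sub_sub A B η ηh hα hα2 hβα hs) ht

lemma caputoIntegral_zero_sub (hα : 0 < α) (hβα : β < α) (ht : 0 ≤ t) :
    caputoIntegral A B α β η ηh 0 t - A (mittagLeffler A B (α - β) α (B η) (α - β) t +
        mittagLeffler A B (α - β) α ηh (1 - β) t) =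
      B (mildSolution A B α β η ηh t) := by
  rw [caputoIntegral, mittagLeffler_eq A B (B η) (sub_pos.2 hβα) hα le_rfl ht, mildSolution]
  simp only [fracMonomial_zero_left, one_smul, zero_add, map_add]
  abel

end MildSolution

-- For `β ≤ 0` the expression defining `ᶜD^β x` is the fractional integral of order `-β` of `x - η`.
theorem homogeneous_mild_solution_general {Y : Type*} [NormedAddCommGroup Y] [NormedSpace ℝ Y]
    [CompleteSpace Y] (A B : Y →L[ℝ] Y) (α β : ℝ)
    (hα1 : 1 < α) (hα2 : α < 2) (hβ1 : β < 1) (η ηh : Y) (x : ℝ → Y)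
    (hx : ∀ t : ℝ, 0 ≤ t → x t = η
      + (∑' p : ℕ × ℕ, ((t ^ ((p.1 : ℝ) * (α - β) + (p.2 : ℝ) * α + α)) /
          Real.Gamma ((p.1 : ℝ) * (α - β) + (p.2 : ℝ) * α + α + 1)) • (Q A B p.1 p.2) (B η))
      + (∑' p : ℕ × ℕ, ((t ^ ((p.1 : ℝ) * (α - β) + (p.2 : ℝ) * α + 1)) /
          Real.Gamma ((p.1 : ℝ) * (α - β) + (p.2 : ℝ) * α + 2)) • (Q A B p.1 p.2) ηh)) :
    x 0 = η ∧
    HasDerivWithinAt x ηh (Set.Ici 0) 0 ∧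
    ∃ Iα' Dα Dβ : ℝ → Y,
      (∀ t : ℝ, 0 < t → HasDerivWithinAt
        (fun τ => (Real.Gamma (2 - α))⁻¹ •
          ∫ s in (0:ℝ)..τ, ((τ - s) ^ (1 - α)) • (x s - η - s • ηh))
        (Iα' t) (Set.Ici 0) t) ∧
      (∀ t : ℝ, 0 < t → HasDerivWithinAt Iα' (Dα t) (Set.Ici 0) t) ∧
      (∀ t : ℝ, 0 < t → HasDerivWithinAt
        (fun τ => (Real.Gamma (1 - β))⁻¹ •
          ∫ s in (0:ℝ)..τ, ((τ - s) ^ (-β)) • (x s - η))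
        (Dβ t) (Set.Ici 0) t) ∧
      (∀ t : ℝ, 0 < t → Dα t - A (Dβ t) = B (x t)) := by
  have hα0 : 0 < α := one_pos.trans hα1
  have hβα : β < α := hβ1.trans hα1
  have hxu : EqOn x (mildSolution A B α β η ηh) (Ici 0) := fun t ht => by
    simp only [hx t ht, mildSolution, mittagLeffler, borelTransform, fracMonomial, add_assoc,
      one_add_one_eq_two]
  have hxu₁ : EqOn (fun s => x s - η) (fun s => mildSolution A B α β η ηh s - η) (Ici 0) :=
    fun s hs => congrArg (· - η) (hxu hs)
  have hxu₂ : EqOn (fun s => x s - η - s • ηh)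
      (fun s => mildSolution A B α β η ηh s - η - s • ηh) (Ici 0) :=
    fun s hs => congrArg (· - s • ηh) (hxu₁ hs)
  have hDα {t : ℝ} (ht : 0 < t) :=
    hasDerivWithinAt_riemannLiouville_mildSolution_sub_sub A B η ηh hα0 hα2 hβα hβ1 ht.le
  have hDβ {t : ℝ} (ht : 0 < t) :=
    hasDerivWithinAt_riemannLiouville_mildSolution_sub A B η ηh hα0 hβα hβ1 ht.le
  rw [show 1 - α = 2 - α - 1 by ring, show -β = 1 - β - 1 by ring]
  refine ⟨(hxu self_mem_Ici).trans (mildSolution_zero A B η ηh hα0 hβα),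
    (hasDerivWithinAt_mildSolution_zero A B η ηh hα1 hβα).congr_of_mem hxu self_mem_Ici, _, _, _,
    fun t ht => (hDα ht).congr_of_mem (riemannLiouville_congr hxu₂) ht.le,
    fun t ht => hasDerivWithinAt_caputoIntegral A B η ηh hα0 hβα hβ1 le_rfl ht.le,
    fun t ht => (hDβ ht).congr_of_mem (riemannLiouville_congr hxu₁) ht.le, fun t ht => ?_⟩
  rw [sub_self, hxu ht.le]
  exact caputoIntegral_zero_sub A B η ηh hα0 hβα ht.le


/-- The mild solution of the homogeneous multi-term fractional evolution equation
satisfies `x(0) = η`, `x'(0) = η̂`, its Caputo derivatives of orders `α ∈ (1,2)` and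
`β ∈ (0,1)` exist for `t > 0`, and `(ᶜD^α x)(t) − A (ᶜD^β x)(t) = B x(t)`. -/
theorem homogeneous_mild_solution {Y : Type*} [NormedAddCommGroup Y] [NormedSpace ℝ Y]
    [CompleteSpace Y] (A B : Y →L[ℝ] Y) (α β : ℝ)
    (hα1 : 1 < α) (hα2 : α < 2) (hβ0 : 0 < β) (hβ1 : β < 1) (η ηh : Y) (x : ℝ → Y)
    (hx : ∀ t : ℝ, 0 ≤ t → x t = η
      + (∑' p : ℕ × ℕ, ((t ^ ((p.1 : ℝ) * (α - β) + (p.2 : ℝ) * α + α)) /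
          Real.Gamma ((p.1 : ℝ) * (α - β) + (p.2 : ℝ) * α + α + 1)) • (Q A B p.1 p.2) (B η))
      + (∑' p : ℕ × ℕ, ((t ^ ((p.1 : ℝ) * (α - β) + (p.2 : ℝ) * α + 1)) /
          Real.Gamma ((p.1 : ℝ) * (α - β) + (p.2 : ℝ) * α + 2)) • (Q A B p.1 p.2) ηh)) :
    x 0 = η ∧
    HasDerivWithinAt x ηh (Set.Ici 0) 0 ∧
    ∃ Iα' Dα Dβ : ℝ → Y,
      (∀ t : ℝ, 0 < t → HasDerivWithinAt
        (fun τ => (Real.Gamma (2 - α))⁻¹ •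
          ∫ s in (0:ℝ)..τ, ((τ - s) ^ (1 - α)) • (x s - η - s • ηh))
        (Iα' t) (Set.Ici 0) t) ∧
      (∀ t : ℝ, 0 < t → HasDerivWithinAt Iα' (Dα t) (Set.Ici 0) t) ∧
      (∀ t : ℝ, 0 < t → HasDerivWithinAt
        (fun τ => (Real.Gamma (1 - β))⁻¹ •
          ∫ s in (0:ℝ)..τ, ((τ - s) ^ (-β)) • (x s - η))
        (Dβ t) (Set.Ici 0) t) ∧
      (∀ t : ℝ, 0 < t → Dα t - A (Dβ t) = B (x t)) :=
  homogeneous_mild_solution_general A B α β hα1 hα2 hβ1 η ηh x hx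
end

section
/- Let Y be a Banach space, A, B bounded linear operators on Y with AB = BA, 1 < α < 2, 0 < β < 1, η, η̂ ∈ Y, and let g : [0,∞) → Y be continuous. Define x(t) = η + ( ∑_{k,m≥0} C(k+m,m) A^{k} B^{m+1} t^{k(α−β)+mα+α} / Γ(k(α−β)+mα+α+1) ) η + ( ∑_{k,m≥0} C(k+m,m) A^{k} B^{m} t^{k(α−β)+mα+1} / Γ(k(α−β)+mα+2) ) η̂ + ∫₀ᵗ [ ∑_{k,m≥0} C(k+m,m) A^{k} B^{m} (t−s)^{k(α−β)+mα+α−1} / Γ(k(α−β)+mα+α) ] g(s) ds. Then x(0) = η, x is differentiable with x′(0) = η̂, the Caputo fractional derivatives (ᶜD^{α}x)(t) and (ᶜD^{β}x)(t) exist for every t > 0, and x satisfies (ᶜD^{α}x)(t) − A(ᶜD^{β}x)(t) = B x(t) + g(t) for all t > 0. -/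
open MeasureTheory

/-!
Let `S_δ f = ∑ C(k+m, m) A ^ k B ^ m I^(k(α-β) + mα + δ) f`, where `I^γ` is the Riemann–Liouville
integral. Pascal's rule for `C(k+m, m)`, the permutability of `A` and `B`, and the semigroup law
`I^γ I^δ = I^(γ+δ)` turn the series into a Volterra equation:
`S_δ f = I^δ f + A I^(α-β) S_δ f + B I^α S_δ f`.

The mild solution is `x = η + S_1 η̂ + S_α f` with `f = B η + g`. Put `v = S_(1-β) η̂ + S_(α-β) f`.
The semigroup law gives `x - η = I^β v`, and the Volterra equation gives `x - η - t η̂ = I^α w` with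
`w = A v + B x + g`. Hence `v` and `w` are the Caputo derivatives of `x` of orders `β` and `α`, and
the equation is the definition of `w`.
-/

section RiemannLiouville

open Set Filter Topology

/-- The Riemann–Liouville kernel `u ^ (γ - 1) / Γ(γ)` of order `γ`, for `0 < γ` and `0 ≤ u`. -/
noncomputable def rlKernel (γ u : ℝ) : ℝ := u ^ (γ - 1) / Real.Gamma γ

/-- The Riemann–Liouville fractional integral `I^γ f` of order `γ` based at `0`. -/
noncomputable def rlIntegral {Y : Type*} [NormedAddCommGroup Y] [NormedSpace ℝ Y]
    (γ : ℝ) (f : ℝ → Y) (t : ℝ) : Y :=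
  ∫ s in (0 : ℝ)..t, rlKernel γ (t - s) • f s

variable {γ δ t : ℝ}

lemma rlKernel_add_one (γ u : ℝ) : rlKernel (γ + 1) u = u ^ γ / Real.Gamma (γ + 1) := by
  rw [rlKernel, add_sub_cancel_right]

lemma rlKernel_nonneg (hγ : 0 < γ) {u : ℝ} (hu : 0 ≤ u) : 0 ≤ rlKernel γ u :=
  div_nonneg (Real.rpow_nonneg hu _) (Real.Gamma_pos_of_pos hγ).le

lemma rlKernel_pos (hγ : 0 < γ) {u : ℝ} (hu : 0 < u) : 0 < rlKernel γ u :=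
  div_pos (Real.rpow_pos_of_pos hu _) (Real.Gamma_pos_of_pos hγ)

lemma rlKernel_le_rlKernel (hγ : 1 ≤ γ) {u v : ℝ} (hu : 0 ≤ u) (huv : u ≤ v) :
    rlKernel γ u ≤ rlKernel γ v :=
  div_le_div_of_nonneg_right (Real.rpow_le_rpow hu huv (by linarith))
    (Real.Gamma_pos_of_pos (by linarith)).le

lemma mul_rlKernel_mul (γ : ℝ) {a u : ℝ} (ha : 0 < a) (hu : 0 ≤ u) :
    a * rlKernel γ (a * u) = a ^ γ * rlKernel γ u := by
  rw [rlKernel, rlKernel, Real.mul_rpow ha.le hu, Real.rpow_sub_one ha.ne']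
  field_simp

lemma intervalIntegrable_rlKernel (hγ : 0 < γ) (a b : ℝ) :
    IntervalIntegrable (rlKernel γ) volume a b :=
  (intervalIntegral.intervalIntegrable_rpow' (by linarith)).div_const _

lemma integral_rlKernel (hγ : 0 < γ) (t : ℝ) :
    ∫ u in (0 : ℝ)..t, rlKernel γ u = rlKernel (γ + 1) t := by
  simp only [rlKernel]
  rw [intervalIntegral.integral_div, integral_rpow (Or.inl (by linarith)), sub_add_cancel,
    Real.zero_rpow hγ.ne', Real.Gamma_add_one hγ.ne', add_sub_cancel_right, sub_zero, div_div]

variable {Y : Type*} [NormedAddCommGroup Y] [NormedSpace ℝ Y] {f g : ℝ → Y}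

lemma inv_Gamma_smul_integral_rpow_smul {κ : ℝ} (hκ : κ = γ - 1) (f : ℝ → Y) (t : ℝ) :
    (Real.Gamma γ)⁻¹ • ∫ s in (0 : ℝ)..t, (t - s) ^ κ • f s = rlIntegral γ f t := by
  subst hκ
  simp only [rlIntegral, rlKernel, ← intervalIntegral.integral_smul, smul_smul, div_eq_inv_mul]

lemma rlIntegral_eq_integral_comp_sub (γ : ℝ) (f : ℝ → Y) (t : ℝ) :
    rlIntegral γ f t = ∫ u in (0 : ℝ)..t, rlKernel γ u • f (t - u) := by
  simpa using! (intervalIntegral.integral_comp_sub_left (a := 0) (b := t)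
    (fun s => rlKernel γ (t - s) • f s) t).symm

@[simp]
lemma rlIntegral_apply_zero (γ : ℝ) (f : ℝ → Y) : rlIntegral γ f 0 = 0 :=
  intervalIntegral.integral_same

@[simp]
lemma rlIntegral_one (f : ℝ → Y) (t : ℝ) : rlIntegral 1 f t = ∫ s in (0 : ℝ)..t, f s := by
  simp [rlIntegral, rlKernel]

lemma rlIntegral_congr (γ : ℝ) (ht : 0 ≤ t) (h : EqOn f g (Ici 0)) :
    rlIntegral γ f t = rlIntegral γ g t := by
  refine intervalIntegral.integral_congr fun s hs => ?_
  rw [uIcc_of_le ht] at hs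
  simp only [h hs.1]

lemma intervalIntegrable_rlKernel_sub_smul (hγ : 0 < γ) (ht : 0 ≤ t)
    (hf : ContinuousOn f (Icc 0 t)) :
    IntervalIntegrable (fun s => rlKernel γ (t - s) • f s) volume 0 t := by
  have h := ((intervalIntegrable_rlKernel hγ 0 t).comp_sub_left t).symm
  rw [sub_self, sub_zero] at h
  exact h.smul_continuousOn (by rwa [uIcc_of_le ht])

lemma rlIntegral_add (hγ : 0 < γ) (ht : 0 ≤ t) (hf : ContinuousOn f (Icc 0 t))
    (hg : ContinuousOn g (Icc 0 t)) :
    rlIntegral γ (f + g) t = rlIntegral γ f t + rlIntegral γ g t := by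
  simp only [rlIntegral, Pi.add_apply, smul_add]
  exact intervalIntegral.integral_add (intervalIntegrable_rlKernel_sub_smul hγ ht hf)
    (intervalIntegrable_rlKernel_sub_smul hγ ht hg)

lemma integral_norm_rlKernel_sub_smul (hγ : 0 < γ) (ht : 0 ≤ t) (f : ℝ → Y) :
    ∫ s in (0 : ℝ)..t, ‖rlKernel γ (t - s) • f s‖ = rlIntegral γ (fun s => ‖f s‖) t := by
  refine intervalIntegral.integral_congr fun s hs => ?_
  rw [uIcc_of_le ht] at hs
  rw [norm_smul, Real.norm_of_nonneg (rlKernel_nonneg hγ (sub_nonneg.2 hs.2)), smul_eq_mul]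

lemma norm_rlIntegral_le {M : ℝ} (hγ : 0 < γ) (ht : 0 ≤ t) (hM : ∀ s ∈ Icc 0 t, ‖f s‖ ≤ M) :
    ‖rlIntegral γ f t‖ ≤ rlKernel (γ + 1) t * M := by
  have hk : IntervalIntegrable (fun s => rlKernel γ (t - s) * M) volume 0 t :=
    intervalIntegrable_rlKernel_sub_smul hγ ht continuousOn_const
  have hkM : ∫ s in (0 : ℝ)..t, rlKernel γ (t - s) * M = rlKernel (γ + 1) t * M := by
    rw [intervalIntegral.integral_mul_const, intervalIntegral.integral_comp_sub_left (rlKernel γ),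
      sub_self, sub_zero, integral_rlKernel hγ]
  rw [← hkM]
  refine intervalIntegral.norm_integral_le_of_norm_le ht (.of_forall fun s hs => ?_) hk
  have hk0 := rlKernel_nonneg hγ (sub_nonneg.2 hs.2)
  rw [norm_smul, Real.norm_of_nonneg hk0]
  exact mul_le_mul_of_nonneg_left (hM s (Ioc_subset_Icc_self hs)) hk0

lemma rlIntegral_eq_rpow_smul (hγ : 0 < γ) (f : ℝ → Y) (ht : 0 ≤ t) :
    rlIntegral γ f t = t ^ γ • ∫ u in (0 : ℝ)..1, rlKernel γ u • f (t * (1 - u)) := by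
  rcases ht.eq_or_lt with rfl | ht
  · simp [Real.zero_rpow hγ.ne']
  have h := intervalIntegral.smul_integral_comp_mul_left (a := 0) (b := 1)
    (fun u => rlKernel γ u • f (t - u)) t
  rw [mul_zero, mul_one] at h
  rw [rlIntegral_eq_integral_comp_sub, ← h, ← intervalIntegral.integral_smul,
    ← intervalIntegral.integral_smul]
  refine intervalIntegral.integral_congr fun u hu => ?_
  rw [uIcc_of_le zero_le_one] at hu
  rw [smul_smul, smul_smul, mul_rlKernel_mul γ ht hu.1, mul_one_sub]

-- Rescaling to the fixed interval `[0, 1]` brings the integral into the scope of dominated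
-- convergence.
lemma continuousOn_rlIntegral (hγ : 0 < γ) (hf : ContinuousOn f (Ici 0)) :
    ContinuousOn (rlIntegral γ f) (Ici 0) := by
  suffices h : ContinuousOn (fun t => ∫ u in (0 : ℝ)..1, rlKernel γ u • f (t * (1 - u)))
      (Ici 0) from
    ((Real.continuous_rpow_const hγ.le).continuousOn.smul h).congr
      fun t ht => rlIntegral_eq_rpow_smul hγ f ht
  have hmaps : ∀ {t u : ℝ}, 0 ≤ t → u ∈ Icc (0 : ℝ) 1 → t * (1 - u) ∈ Icc 0 t := fun ht hu =>
    ⟨mul_nonneg ht (sub_nonneg.2 hu.2), mul_le_of_le_one_right ht (by linarith [hu.1])⟩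
  intro t₀ ht₀
  obtain ⟨M, hM⟩ := isCompact_Icc.exists_bound_of_continuousOn
    (hf.mono (Icc_subset_Ici_self : Icc 0 (t₀ + 1) ⊆ Ici 0))
  refine intervalIntegral.continuousWithinAt_of_dominated_interval
    (bound := fun u => rlKernel γ u * M) ?_ ?_
    ((intervalIntegrable_rlKernel hγ 0 1).mul_const M) ?_
  · filter_upwards [self_mem_nhdsWithin] with t ht
    refine ((intervalIntegrable_rlKernel hγ 0 1).smul_continuousOn ?_).def'.aestronglyMeasurable
    refine hf.comp (by fun_prop) fun u hu => (hmaps ht ?_).1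
    rwa [uIcc_of_le zero_le_one] at hu
  · filter_upwards [self_mem_nhdsWithin, mem_nhdsWithin_of_mem_nhds (Iio_mem_nhds (lt_add_one t₀))]
      with t ht htt₀
    refine .of_forall fun u hu => ?_
    rw [uIoc_of_le zero_le_one] at hu
    have hmem := hmaps ht (Ioc_subset_Icc_self hu)
    rw [norm_smul, Real.norm_of_nonneg (rlKernel_nonneg hγ hu.1.le)]
    exact mul_le_mul_of_nonneg_left (hM _ ⟨hmem.1, hmem.2.trans htt₀.le⟩)
      (rlKernel_nonneg hγ hu.1.le)
  · refine .of_forall fun u hu => ?_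
    rw [uIoc_of_le zero_le_one] at hu
    exact ((hf.comp (f := fun t => t * (1 - u)) (s := Ici 0) (by fun_prop)
      fun t ht => (hmaps ht (Ioc_subset_Icc_self hu)).1) t₀ ht₀).const_smul _

lemma rlIntegral_clm [CompleteSpace Y] (hγ : 0 < γ) (ht : 0 ≤ t) (hf : ContinuousOn f (Icc 0 t))
    (L : Y →L[ℝ] Y) : rlIntegral γ (L ∘ f) t = L (rlIntegral γ f t) := by
  simp only [rlIntegral, Function.comp_apply, ← map_smul]
  exact L.intervalIntegral_comp_comm (intervalIntegrable_rlKernel_sub_smul hγ ht hf)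

lemma rlIntegral_const [CompleteSpace Y] (hγ : 0 < γ) (y : Y) (t : ℝ) :
    rlIntegral γ (fun _ => y) t = rlKernel (γ + 1) t • y := by
  rw [rlIntegral_eq_integral_comp_sub, intervalIntegral.integral_smul_const, integral_rlKernel hγ]

lemma rlIntegral_rlKernel (hγ : 0 < γ) (hδ : 0 < δ) (ht : 0 < t) :
    rlIntegral γ (rlKernel δ) t = rlKernel (γ + δ) t := by
  have hbeta : ∫ u in (0 : ℝ)..t, u ^ (γ - 1) * (t - u) ^ (δ - 1)
      = t ^ (γ + δ - 1) * (Real.Gamma γ * Real.Gamma δ / Real.Gamma (γ + δ)) := by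
    have h := Complex.betaIntegral_scaled (γ : ℂ) (δ : ℂ) ht
    rw [Complex.betaIntegral_eq_Gamma_mul_div _ _ (by simpa) (by simpa)] at h
    apply Complex.ofReal_injective
    rw [← intervalIntegral.integral_ofReal]
    push_cast [Complex.ofReal_cpow ht.le, ← Complex.Gamma_ofReal]
    rw [← h]
    refine intervalIntegral.integral_congr fun u hu => ?_
    rw [uIcc_of_le ht.le] at hu
    push_cast [Complex.ofReal_cpow hu.1, Complex.ofReal_cpow (sub_nonneg.2 hu.2)]
    rfl
  have hΓγ := (Real.Gamma_pos_of_pos hγ).ne'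
  have hΓδ := (Real.Gamma_pos_of_pos hδ).ne'
  rw [rlIntegral_eq_integral_comp_sub]
  simp only [rlKernel, smul_eq_mul, div_mul_div_comm]
  rw [intervalIntegral.integral_div, hbeta]
  field_simp

section Semigroup

open scoped Convolution

open ContinuousLinearMap (lsmul)

lemma indicator_rlIntegral (γ : ℝ) (f : ℝ → Y) :
    (Ioi 0).indicator (rlIntegral γ f)
      = (Ioi 0).indicator (rlKernel γ) ⋆[lsmul ℝ ℝ] (Ioi 0).indicator f := by
  rw [← posConvolution_eq_convolution_indicator _ _ _ volume, posConvolution]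
  congr 1
  ext t
  exact rlIntegral_eq_integral_comp_sub γ f t

lemma convolutionExistsAt_indicator_rlKernel
    (h : 0 < t → IntervalIntegrable (fun s => rlKernel γ (t - s) • f s) volume 0 t) :
    ConvolutionExistsAt ((Ioi 0).indicator (rlKernel γ)) ((Ioi 0).indicator f) t (lsmul ℝ ℝ) := by
  have hind : (fun u => lsmul ℝ ℝ ((Ioi 0).indicator (rlKernel γ) u) ((Ioi 0).indicator f (t - u)))
      = (Ioo 0 t).indicator fun u => rlKernel γ u • f (t - u) := by
    ext u
    by_cases h0 : 0 < u <;> by_cases ht : u < t <;> simp [indicator, h0, ht]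
  rw [ConvolutionExistsAt, hind, integrable_indicator_iff measurableSet_Ioo]
  rcases le_or_gt t 0 with ht | ht
  · simp [Ioo_eq_empty ht.not_gt]
  · have hcomp := ((h ht).comp_sub_left t).symm
    simp only [sub_self, sub_zero, sub_sub_cancel] at hcomp
    exact hcomp.1.mono_set Ioo_subset_Ioc_self

lemma norm_indicator_rlKernel (hγ : 0 < γ) :
    (fun u => ‖(Ioi 0).indicator (rlKernel γ) u‖) = (Ioi 0).indicator (rlKernel γ) := by
  ext u
  exact Real.norm_of_nonneg (indicator_nonneg (fun v hv => rlKernel_nonneg hγ (le_of_lt hv)) u)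

-- A non-integrable integrand would have integral `0`, but the integral is `rlKernel (γ + δ) t > 0`.
lemma intervalIntegrable_rlKernel_sub_smul_rlKernel (hγ : 0 < γ) (hδ : 0 < δ) (ht : 0 < t) :
    IntervalIntegrable (fun s => rlKernel γ (t - s) • rlKernel δ s) volume 0 t := by
  by_contra h
  exact (rlKernel_pos (add_pos hγ hδ) ht).ne'
    ((rlIntegral_rlKernel hγ hδ ht).symm.trans (intervalIntegral.integral_undef h))

-- Extended by `0` to negative times, `I^γ f` is a convolution, and the semigroup law is the
-- associativity of convolution.
theorem rlIntegral_rlIntegral [CompleteSpace Y] (hγ : 0 < γ) (hδ : 0 < δ)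
    (hf : ContinuousOn f (Ici 0)) (ht : 0 ≤ t) :
    rlIntegral γ (rlIntegral δ f) t = rlIntegral (γ + δ) f t := by
  rcases ht.eq_or_lt with rfl | ht
  · simp
  have hnorm : ContinuousOn (fun s => ‖f s‖) (Ici 0) := hf.norm
  have hkernel (ε : ℝ) : AEStronglyMeasurable ((Ioi 0).indicator (rlKernel ε)) :=
    (((measurable_id.pow_const _).div_const _).indicator measurableSet_Ioi).aestronglyMeasurable
  have hφ : AEStronglyMeasurable ((Ioi 0).indicator f) :=
    (aestronglyMeasurable_indicator_iff measurableSet_Ioi).2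
      ((hf.mono Ioi_subset_Ici_self).aestronglyMeasurable measurableSet_Ioi)
  have hφ_norm : (fun s => ‖(Ioi 0).indicator f s‖) = (Ioi 0).indicator fun s => ‖f s‖ :=
    funext fun s => norm_indicator_eq_indicator_norm f s
  have hkk : (Ioi 0).indicator (rlIntegral γ (rlKernel δ)) = (Ioi 0).indicator (rlKernel (γ + δ)) :=
    indicator_congr fun u hu => rlIntegral_rlKernel hγ hδ hu
  have hassoc := convolution_assoc (lsmul ℝ ℝ) (lsmul ℝ ℝ) (lsmul ℝ ℝ) (lsmul ℝ ℝ)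
    (fun a b y => smul_assoc a b y) (x₀ := t) (hkernel γ) (hkernel δ) hφ
    (.of_forall fun u => convolutionExistsAt_indicator_rlKernel fun hu =>
      intervalIntegrable_rlKernel_sub_smul_rlKernel hγ hδ hu)
    (.of_forall fun u => by
      rw [norm_indicator_rlKernel hδ, hφ_norm]
      exact convolutionExistsAt_indicator_rlKernel fun hu =>
        intervalIntegrable_rlKernel_sub_smul hδ hu.le (hnorm.mono Icc_subset_Ici_self))
    (by
      rw [norm_indicator_rlKernel hγ, norm_indicator_rlKernel hδ, hφ_norm]
      have hconv := indicator_rlIntegral δ fun s => ‖f s‖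
      change ConvolutionExistsAt _ (_ ⋆[lsmul ℝ ℝ] _) t (lsmul ℝ ℝ)
      rw [← hconv]
      exact convolutionExistsAt_indicator_rlKernel fun ht =>
        intervalIntegrable_rlKernel_sub_smul hγ ht.le
          ((continuousOn_rlIntegral hδ hnorm).mono Icc_subset_Ici_self))
  rw [← indicator_rlIntegral, ← indicator_rlIntegral, ← indicator_rlIntegral, hkk,
    ← indicator_rlIntegral] at hassoc
  simpa [indicator, ht] using hassoc.symm

end Semigroup

section Derivatives

variable [CompleteSpace Y]

lemma hasDerivWithinAt_rlIntegral_one (hf : ContinuousOn f (Ici 0)) (ht : 0 ≤ t) :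
    HasDerivWithinAt (rlIntegral 1 f) (f t) (Ici 0) t := by
  have hext : Continuous fun s => f (max s 0) :=
    hf.comp_continuous (by fun_prop) fun s => le_max_right s 0
  have hderiv := (hext.integral_hasStrictDerivAt 0 t).hasDerivAt.hasDerivWithinAt (s := Ici 0)
  simp only [max_eq_left ht, ← rlIntegral_one] at hderiv
  have heq : EqOn (rlIntegral 1 f) (rlIntegral 1 fun s => f (max s 0)) (Ici 0) := fun τ hτ =>
    rlIntegral_congr 1 hτ fun s hs => by simp only [max_eq_left (mem_Ici.1 hs)]
  exact hderiv.congr heq (heq ht)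

lemma hasDerivWithinAt_rlIntegral_one_add (hγ : 0 < γ) (hf : ContinuousOn f (Ici 0))
    (ht : 0 ≤ t) : HasDerivWithinAt (rlIntegral (1 + γ) f) (rlIntegral γ f t) (Ici 0) t := by
  have heq : EqOn (rlIntegral (1 + γ) f) (rlIntegral 1 (rlIntegral γ f)) (Ici 0) := fun τ hτ =>
    (rlIntegral_rlIntegral one_pos hγ hf hτ).symm
  exact (hasDerivWithinAt_rlIntegral_one (continuousOn_rlIntegral hγ hf) ht).congr heq (heq ht)

lemma rlIntegral_eq_of_eqOn_rlIntegral (hγ : 0 < γ) (hδ : 0 < δ) (hf : ContinuousOn f (Ici 0))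
    (hg : EqOn g (rlIntegral δ f) (Ici 0)) (ht : 0 ≤ t) :
    rlIntegral γ g t = rlIntegral (γ + δ) f t :=
  (rlIntegral_congr γ ht hg).trans (rlIntegral_rlIntegral hγ hδ hf ht)

lemma hasDerivWithinAt_caputo_of_lt_one (hδ : 0 < δ) (hδ1 : δ < 1) (hf : ContinuousOn f (Ici 0))
    (hg : EqOn g (rlIntegral δ f) (Ici 0)) (ht : 0 ≤ t) :
    HasDerivWithinAt
      (fun τ => (Real.Gamma (1 - δ))⁻¹ • ∫ s in (0 : ℝ)..τ, (τ - s) ^ (-δ) • g s)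
      (f t) (Ici 0) t := by
  have heq : EqOn (fun τ => (Real.Gamma (1 - δ))⁻¹ • ∫ s in (0 : ℝ)..τ, (τ - s) ^ (-δ) • g s)
      (rlIntegral 1 f) (Ici 0) := fun τ hτ => by
    beta_reduce
    rw [inv_Gamma_smul_integral_rpow_smul (by ring),
      rlIntegral_eq_of_eqOn_rlIntegral (by linarith) hδ hf hg hτ, sub_add_cancel]
  exact (hasDerivWithinAt_rlIntegral_one hf ht).congr heq (heq ht)

lemma hasDerivWithinAt_caputo_of_lt_two (hδ : 0 < δ) (hδ2 : δ < 2) (hf : ContinuousOn f (Ici 0))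
    (hg : EqOn g (rlIntegral δ f) (Ici 0)) (ht : 0 ≤ t) :
    HasDerivWithinAt
      (fun τ => (Real.Gamma (2 - δ))⁻¹ • ∫ s in (0 : ℝ)..τ, (τ - s) ^ (1 - δ) • g s)
      (rlIntegral 1 f t) (Ici 0) t := by
  have heq : EqOn (fun τ => (Real.Gamma (2 - δ))⁻¹ • ∫ s in (0 : ℝ)..τ, (τ - s) ^ (1 - δ) • g s)
      (rlIntegral (1 + 1) f) (Ici 0) := fun τ hτ => by
    beta_reduce
    rw [inv_Gamma_smul_integral_rpow_smul (by ring),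
      rlIntegral_eq_of_eqOn_rlIntegral (by linarith) hδ hf hg hτ, sub_add_cancel,
      one_add_one_eq_two]
  exact (hasDerivWithinAt_rlIntegral_one_add one_pos hf ht).congr heq (heq ht)

lemma hasDerivWithinAt_zero_of_eqOn_rlIntegral {y z : Y} (hδ : 1 < δ) (hf : ContinuousOn f (Ici 0))
    (hg : EqOn (fun s => g s - y - s • z) (rlIntegral δ f) (Ici 0)) :
    HasDerivWithinAt g z (Ici 0) 0 := by
  have hI := hasDerivWithinAt_rlIntegral_one_add (sub_pos.2 hδ) hf le_rfl
  rw [rlIntegral_apply_zero, add_sub_cancel] at hI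
  have hlin : HasDerivWithinAt (fun s : ℝ => y + s • z) z (Ici 0) 0 := by
    simpa using ((hasDerivWithinAt_id (0 : ℝ) (Ici 0)).smul_const z).const_add y
  have heq : EqOn g (fun s => y + s • z + rlIntegral δ f s) (Ici 0) := fun s hs => by
    simp only [← hg hs]
    abel
  simpa using (hlin.add hI).congr heq (heq self_mem_Ici)

end Derivatives

lemma hasSum_rlIntegral {ι : Type*} [Countable ι] {e b : ι → ℝ} {F : ι → ℝ → Y}
    (he : ∀ i, 0 < e i) (ht : 0 ≤ t) (hF : ∀ i, ContinuousOn (F i) (Icc 0 t))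
    (hFb : ∀ i, ∀ s ∈ Icc 0 t, ‖F i s‖ ≤ b i)
    (hb : Summable fun i => rlKernel (e i + 1) t * b i) :
    HasSum (fun i => rlIntegral (e i) (F i) t)
      (∫ s in (0 : ℝ)..t, ∑' i, rlKernel (e i) (t - s) • F i s) := by
  have hnorm (i : ι) :
      ∫ s in (0 : ℝ)..t, ‖rlKernel (e i) (t - s) • F i s‖ ≤ rlKernel (e i + 1) t * b i := by
    rw [integral_norm_rlKernel_sub_smul (he i) ht]
    exact (Real.le_norm_self _).trans
      (norm_rlIntegral_le (he i) ht fun s hs => (norm_norm _).trans_le (hFb i s hs))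
  simp only [rlIntegral, intervalIntegral.integral_of_le ht] at hnorm ⊢
  exact hasSum_integral_of_summable_integral_norm
    (fun i => (intervalIntegrable_rlKernel_sub_smul (he i) ht (hF i)).1)
    (hb.of_nonneg_of_le (fun i => integral_nonneg fun s => norm_nonneg _) hnorm)

end RiemannLiouville

section MittagLeffler

open Set Filter Topology

lemma rpow_mul_exp_neg_le_Gamma {R x : ℝ} (hR : 0 ≤ R) (hx : 0 ≤ x) :
    R ^ x * Real.exp (-R) ≤ Real.Gamma (x + 1) := by
  have hΓ := Real.GammaIntegral_convergent (s := x + 1) (by linarith)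
  rw [Real.Gamma_eq_integral (by linarith)]
  rw [add_sub_cancel_right] at hΓ ⊢
  calc R ^ x * Real.exp (-R) = ∫ s in Ioi R, Real.exp (-s) * R ^ x := by
        rw [integral_mul_const, integral_exp_neg_Ioi, mul_comm]
    _ ≤ ∫ s in Ioi R, Real.exp (-s) * s ^ x :=
        setIntegral_mono_on ((integrableOn_exp_neg_Ioi R).mul_const _)
          (hΓ.mono_set (Ioi_subset_Ioi hR)) measurableSet_Ioi fun s hs =>
            mul_le_mul_of_nonneg_left (Real.rpow_le_rpow hR (le_of_lt hs) hx) (Real.exp_pos _).le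
    _ ≤ ∫ s in Ioi 0, Real.exp (-s) * s ^ x := by
        refine setIntegral_mono_set hΓ ?_ (Ioi_subset_Ioi hR).eventuallyLE
        filter_upwards [ae_restrict_mem measurableSet_Ioi] with s hs
        exact mul_nonneg (Real.exp_pos _).le (Real.rpow_nonneg (le_of_lt hs) _)

lemma rlKernel_add_one_le_exp_mul_rpow {R T x : ℝ} (hR : 0 < R) (hT : 0 ≤ T) (hx : 0 ≤ x) :
    rlKernel (x + 1) T ≤ Real.exp R * (T / R) ^ x := by
  rw [rlKernel_add_one, div_le_iff₀ (Real.Gamma_pos_of_pos (by linarith))]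
  calc T ^ x = Real.exp R * (T / R) ^ x * (R ^ x * Real.exp (-R)) := by
        rw [Real.div_rpow hT hR.le, Real.exp_neg]
        field_simp
    _ ≤ Real.exp R * (T / R) ^ x * Real.Gamma (x + 1) := by
        gcongr
        exact rpow_mul_exp_neg_le_Gamma hR.le hx

/-- The exponent `k c + m d` attached to the index `(k, m)` of a bivariate Mittag-Leffler series. -/
noncomputable def mlExponent (c d : ℝ) (p : ℕ × ℕ) : ℝ := p.1 * c + p.2 * d

/-- The coefficient `C(k+m, m) A ^ k B ^ m` of a bivariate Mittag-Leffler series. It is defined over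
any semiring so that its value at the norms of two operators can serve as a majorant. -/
def mlCoeff {R : Type*} [Semiring R] (A B : R) (p : ℕ × ℕ) : R :=
  (p.1 + p.2).choose p.2 • (A ^ p.1 * B ^ p.2)

section Exponents

variable {c d δ : ℝ}

lemma mlExponent_nonneg (hc : 0 ≤ c) (hd : 0 ≤ d) (p : ℕ × ℕ) : 0 ≤ mlExponent c d p := by
  unfold mlExponent
  positivity

lemma mlExponent_add_pos (hc : 0 < c) (hd : 0 < d) (hδ : 0 < δ) (p : ℕ × ℕ) :
    0 < mlExponent c d p + δ :=
  add_pos_of_nonneg_of_pos (mlExponent_nonneg hc.le hd.le p) hδ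

lemma mlExponent_succ_fst_add (c d δ : ℝ) (p : ℕ × ℕ) :
    mlExponent c d (p.1 + 1, p.2) + δ = mlExponent c d p + (c + δ) := by
  simp only [mlExponent, Nat.cast_succ]
  ring

lemma mlExponent_succ_snd_add (c d δ : ℝ) (p : ℕ × ℕ) :
    mlExponent c d (p.1, p.2 + 1) + δ = mlExponent c d p + (d + δ) := by
  simp only [mlExponent, Nat.cast_succ]
  ring

end Exponents

section Coefficients

variable {R : Type*} [Semiring R] (A B : R) (k m : ℕ)

@[simp]
lemma mlCoeff_zero_zero : mlCoeff A B (0, 0) = 1 := by simp [mlCoeff]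

lemma mlCoeff_succ_zero : mlCoeff A B (k + 1, 0) = A * mlCoeff A B (k, 0) := by
  simp [mlCoeff, pow_succ']

lemma mlCoeff_zero_succ : mlCoeff A B (0, m + 1) = B * mlCoeff A B (0, m) := by
  simp [mlCoeff, pow_succ']

variable {A B}

lemma mlCoeff_succ_succ (hAB : Commute A B) :
    mlCoeff A B (k + 1, m + 1) = A * mlCoeff A B (k, m + 1) + B * mlCoeff A B (k + 1, m) := by
  have hchoose : (k + 1 + (m + 1)).choose (m + 1)
      = (k + (m + 1)).choose (m + 1) + (k + 1 + m).choose m := by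
    rw [← add_assoc, Nat.choose_succ_succ', add_comm, add_right_comm, add_assoc]
  have hA : A * (A ^ k * B ^ (m + 1)) = A ^ (k + 1) * B ^ (m + 1) := by
    rw [← mul_assoc, ← pow_succ']
  have hB : B * (A ^ (k + 1) * B ^ m) = A ^ (k + 1) * B ^ (m + 1) := by
    rw [← mul_assoc, ← (hAB.pow_left _).eq, mul_assoc, ← pow_succ']
  simp only [mlCoeff, hchoose, add_smul, mul_smul_comm, hA, hB]

end Coefficients

section Majorant

variable {a b c d δ T : ℝ}

lemma rpow_mlExponent_add {q : ℝ} (hq : 0 ≤ q) (hc : 0 ≤ c) (hd : 0 ≤ d) (hδ : 0 ≤ δ) (p : ℕ × ℕ) :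
    q ^ (mlExponent c d p + δ) = (q ^ c) ^ p.1 * (q ^ d) ^ p.2 * q ^ δ := by
  rw [Real.rpow_add_of_nonneg hq (mlExponent_nonneg hc hd p) hδ, mlExponent,
    Real.rpow_add_of_nonneg hq (by positivity) (by positivity), mul_comm _ c, mul_comm _ d,
    Real.rpow_mul_natCast hq, Real.rpow_mul_natCast hq]

lemma mlCoeff_nonneg (ha : 0 ≤ a) (hb : 0 ≤ b) (p : ℕ × ℕ) : 0 ≤ mlCoeff a b p := by
  unfold mlCoeff
  positivity

lemma mlCoeff_le_two_mul_pow (ha : 0 ≤ a) (hb : 0 ≤ b) (p : ℕ × ℕ) :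
    mlCoeff a b p ≤ (2 * a) ^ p.1 * (2 * b) ^ p.2 := by
  have hchoose : ((p.1 + p.2).choose p.2 : ℝ) ≤ 2 ^ p.1 * 2 ^ p.2 := by
    rw [← pow_add]
    exact_mod_cast Nat.choose_le_two_pow _ _
  rw [mlCoeff, nsmul_eq_mul, mul_pow, mul_pow, mul_mul_mul_comm]
  gcongr

lemma summable_mlCoeff_mul_rlKernel (ha : 0 ≤ a) (hb : 0 ≤ b) (hc : 0 < c) (hd : 0 < d)
    (hδ : 0 ≤ δ) (hT : 0 ≤ T) :
    Summable fun p => mlCoeff a b p * rlKernel (mlExponent c d p + δ + 1) T := by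
  have hsmall (a : ℝ) {c : ℝ} (hc : 0 < c) : ∀ᶠ R in atTop, 2 * a * (T / R) ^ c < 1 := by
    have hlim : Tendsto (fun R : ℝ => T / R) atTop (𝓝 0) := tendsto_const_nhds.div_atTop tendsto_id
    have hlim' := (hlim.rpow_const (Or.inr hc.le)).const_mul (2 * a)
    rw [Real.zero_rpow hc.ne', mul_zero] at hlim'
    exact hlim'.eventually_lt_const one_pos
  -- Since `Γ(x + 1) ≥ R ^ x exp(-R)` for every `R > 0`, a large `R` yields a geometric majorant.
  obtain ⟨R, hR, haR, hbR⟩ := ((eventually_gt_atTop 0).and ((hsmall a hc).and (hsmall b hd))).exists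
  have hq : 0 ≤ T / R := div_nonneg hT hR.le
  have hgeom := ((summable_geometric_of_lt_one (by positivity) haR).mul_of_nonneg
    (summable_geometric_of_lt_one (by positivity) hbR) (fun _ => by positivity)
    fun _ => by positivity).mul_right (Real.exp R * (T / R) ^ δ)
  refine hgeom.of_nonneg_of_le (fun p => ?_) fun p => ?_
  · have hρ := mlExponent_nonneg hc.le hd.le p
    exact mul_nonneg (mlCoeff_nonneg ha hb p) (rlKernel_nonneg (by positivity) hT)
  · have hρ := mlExponent_nonneg hc.le hd.le p
    calc mlCoeff a b p * rlKernel (mlExponent c d p + δ + 1) T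
        ≤ (2 * a) ^ p.1 * (2 * b) ^ p.2
          * (Real.exp R * (T / R) ^ (mlExponent c d p + δ)) :=
          mul_le_mul (mlCoeff_le_two_mul_pow ha hb p)
            (rlKernel_add_one_le_exp_mul_rpow hR hT (by positivity))
            (rlKernel_nonneg (by positivity) hT) (by positivity)
      _ = (2 * a * (T / R) ^ c) ^ p.1 * (2 * b * (T / R) ^ d) ^ p.2
          * (Real.exp R * (T / R) ^ δ) := by
          rw [rpow_mlExponent_add hq hc.le hd.le hδ, mul_pow, mul_pow (2 * b)]
          ring

end Majorant

section NormBounds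

variable {𝕜 Y : Type*} [NontriviallyNormedField 𝕜] [NormedAddCommGroup Y] [NormedSpace 𝕜 Y]

lemma norm_clm_pow_le (A : Y →L[𝕜] Y) (n : ℕ) : ‖A ^ n‖ ≤ ‖A‖ ^ n := by
  rcases n.eq_zero_or_pos with rfl | hn
  · simpa [ContinuousLinearMap.one_def] using ContinuousLinearMap.norm_id_le (𝕜 := 𝕜) (E := Y)
  · exact norm_pow_le' A hn

lemma norm_mlCoeff_le (A B : Y →L[𝕜] Y) (p : ℕ × ℕ) : ‖mlCoeff A B p‖ ≤ mlCoeff ‖A‖ ‖B‖ p := by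
  refine (norm_nsmul_le).trans ?_
  rw [mlCoeff, nsmul_eq_mul]
  gcongr
  exact (norm_mul_le _ _).trans (by gcongr <;> exact norm_clm_pow_le _ _)

lemma norm_mlCoeff_apply_le (A B : Y →L[𝕜] Y) (p : ℕ × ℕ) (y : Y) :
    ‖mlCoeff A B p y‖ ≤ mlCoeff ‖A‖ ‖B‖ p * ‖y‖ :=
  (mlCoeff A B p).le_of_opNorm_le (norm_mlCoeff_le A B p) y

end NormBounds

section PascalSummation

variable {Y : Type*} [AddCommMonoid Y] [TopologicalSpace Y]

lemma hasSum_comp_succ_fst_iff {F : ℕ × ℕ → Y} {y : Y} (hF : ∀ m, F (0, m) = 0) :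
    HasSum (fun p : ℕ × ℕ => F (p.1 + 1, p.2)) y ↔ HasSum F y := by
  refine (Prod.map_injective.2 ⟨Nat.succ_injective, Function.injective_id⟩).hasSum_iff ?_
  rintro ⟨_ | k, m⟩ hkm
  · exact hF m
  · exact absurd ⟨(k, m), rfl⟩ hkm

lemma hasSum_comp_succ_snd_iff {F : ℕ × ℕ → Y} {y : Y} (hF : ∀ k, F (k, 0) = 0) :
    HasSum (fun p : ℕ × ℕ => F (p.1, p.2 + 1)) y ↔ HasSum F y := by
  refine (Prod.map_injective.2 ⟨Function.injective_id, Nat.succ_injective⟩).hasSum_iff ?_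
  rintro ⟨k, _ | m⟩ hkm
  · exact hF k
  · exact absurd ⟨(k, m), rfl⟩ hkm

variable {R : Type*} [Semiring R] [Module R Y] [ContinuousAdd Y]

lemma hasSum_mlCoeff_apply {A B : Y →L[R] Y} (hAB : Commute A B) {z : ℕ × ℕ → Y} {a b : Y}
    (ha : HasSum (fun p => mlCoeff A B p (z (p.1 + 1, p.2))) a)
    (hb : HasSum (fun p => mlCoeff A B p (z (p.1, p.2 + 1))) b) :
    HasSum (fun p => mlCoeff A B p (z p)) (z (0, 0) + A a + B b) := by
  let zA : ℕ × ℕ → Y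
    | (0, _) => 0
    | (k + 1, m) => A (mlCoeff A B (k, m) (z (k + 1, m)))
  let zB : ℕ × ℕ → Y
    | (_, 0) => 0
    | (k, m + 1) => B (mlCoeff A B (k, m) (z (k, m + 1)))
  have hA : HasSum zA (A a) := (hasSum_comp_succ_fst_iff fun _ => rfl).1 (A.hasSum ha)
  have hB : HasSum zB (B b) := (hasSum_comp_succ_snd_iff fun _ => by simp [zB]).1 (B.hasSum hb)
  convert ((hasSum_ite_eq (0, 0) (z (0, 0))).add hA).add hB using 2 with p
  rcases p with ⟨_ | k, _ | m⟩
  · simp [zA, zB]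
  · simp [zA, zB, mlCoeff_zero_succ]
  · simp [zA, zB, mlCoeff_succ_zero]
  · simp [zA, zB, mlCoeff_succ_succ k m hAB]

end PascalSummation

section OperatorSeries

variable {Y : Type*} [NormedAddCommGroup Y] [NormedSpace ℝ Y]

/-- The bivariate Mittag-Leffler operator series
`∑ C(k+m, m) A ^ k B ^ m I^(k c + m d + δ) f` over all `(k, m)`. -/
noncomputable def mlIntegral (A B : Y →L[ℝ] Y) (c d δ : ℝ) (f : ℝ → Y) (t : ℝ) : Y :=
  ∑' p : ℕ × ℕ, mlCoeff A B p (rlIntegral (mlExponent c d p + δ) f t)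

variable {A B : Y →L[ℝ] Y} {c d γ δ t : ℝ} {f g : ℝ → Y}

lemma exists_summable_norm_mlCoeff_rlIntegral_le (A B : Y →L[ℝ] Y) (hc : 0 < c) (hd : 0 < d)
    (hδ : 0 < δ) (hf : ContinuousOn f (Ici 0)) {T : ℝ} (hT : 0 ≤ T) :
    ∃ b : ℕ × ℕ → ℝ, Summable b ∧ ∀ p, ∀ t ∈ Icc 0 T,
      ‖mlCoeff A B p (rlIntegral (mlExponent c d p + δ) f t)‖ ≤ b p := by
  obtain ⟨M, hM⟩ := isCompact_Icc.exists_bound_of_continuousOn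
    (hf.mono (Icc_subset_Ici_self : Icc 0 T ⊆ Ici 0))
  have hM0 : 0 ≤ M := (norm_nonneg _).trans (hM 0 ⟨le_rfl, hT⟩)
  refine ⟨fun p => mlCoeff ‖A‖ ‖B‖ p * rlKernel (mlExponent c d p + δ + 1) T * M,
    (summable_mlCoeff_mul_rlKernel (norm_nonneg A) (norm_nonneg B) hc hd hδ.le hT).mul_right M,
    fun p t ht => ?_⟩
  have hρ := mlExponent_add_pos hc hd hδ p
  calc ‖mlCoeff A B p (rlIntegral (mlExponent c d p + δ) f t)‖
      ≤ mlCoeff ‖A‖ ‖B‖ p * ‖rlIntegral (mlExponent c d p + δ) f t‖ :=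
        norm_mlCoeff_apply_le A B p _
    _ ≤ mlCoeff ‖A‖ ‖B‖ p * (rlKernel (mlExponent c d p + δ + 1) t * M) :=
        mul_le_mul_of_nonneg_left
          (norm_rlIntegral_le hρ ht.1 fun s hs => hM s ⟨hs.1, hs.2.trans ht.2⟩)
          (mlCoeff_nonneg (norm_nonneg A) (norm_nonneg B) p)
    _ ≤ mlCoeff ‖A‖ ‖B‖ p * rlKernel (mlExponent c d p + δ + 1) T * M := by
        rw [mul_assoc]
        exact mul_le_mul_of_nonneg_left (mul_le_mul_of_nonneg_right
          (rlKernel_le_rlKernel (by linarith) ht.1 ht.2) hM0)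
          (mlCoeff_nonneg (norm_nonneg A) (norm_nonneg B) p)

lemma rlKernel_smul_mlCoeff_apply (A B : Y →L[ℝ] Y) (p : ℕ × ℕ) (γ u : ℝ) (y : Y) :
    rlKernel γ u • mlCoeff A B p y
      = ((p.1 + p.2).choose p.2 * u ^ (γ - 1) / Real.Gamma γ) • (A ^ p.1 * B ^ p.2) y := by
  rw [rlKernel, mlCoeff, smul_apply, ← Nat.cast_smul_eq_nsmul ℝ, smul_smul,
    mul_comm, mul_div_assoc]

variable [CompleteSpace Y]

lemma hasSum_mlIntegral (A B : Y →L[ℝ] Y) (hc : 0 < c) (hd : 0 < d) (hδ : 0 < δ)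
    (hf : ContinuousOn f (Ici 0)) (ht : 0 ≤ t) :
    HasSum (fun p => mlCoeff A B p (rlIntegral (mlExponent c d p + δ) f t))
      (mlIntegral A B c d δ f t) := by
  obtain ⟨b, hb, hfb⟩ := exists_summable_norm_mlCoeff_rlIntegral_le A B hc hd hδ hf ht
  exact (hb.of_norm_bounded fun p => hfb p t ⟨ht, le_rfl⟩).hasSum

lemma continuousOn_mlIntegral (A B : Y →L[ℝ] Y) (hc : 0 < c) (hd : 0 < d) (hδ : 0 < δ)
    (hf : ContinuousOn f (Ici 0)) : ContinuousOn (mlIntegral A B c d δ f) (Ici 0) := by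
  intro t ht
  have hT : 0 ≤ t + 1 := add_nonneg ht zero_le_one
  obtain ⟨b, hb, hfb⟩ := exists_summable_norm_mlCoeff_rlIntegral_le A B hc hd hδ hf hT
  have hcont : ContinuousOn (mlIntegral A B c d δ f) (Icc 0 (t + 1)) :=
    continuousOn_tsum (fun p => (mlCoeff A B p).continuous.comp_continuousOn
      ((continuousOn_rlIntegral (mlExponent_add_pos hc hd hδ p) hf).mono Icc_subset_Ici_self))
      hb hfb
  refine (hcont t ⟨ht, by linarith⟩).mono_of_mem_nhdsWithin ?_
  exact inter_mem_nhdsWithin _ (Iic_mem_nhds (lt_add_one t))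

lemma mlIntegral_add (A B : Y →L[ℝ] Y) (hc : 0 < c) (hd : 0 < d) (hδ : 0 < δ)
    (hf : ContinuousOn f (Ici 0)) (hg : ContinuousOn g (Ici 0)) (ht : 0 ≤ t) :
    mlIntegral A B c d δ (f + g) t = mlIntegral A B c d δ f t + mlIntegral A B c d δ g t := by
  refine (hasSum_mlIntegral A B hc hd hδ (hf.add hg) ht).unique ?_
  convert (hasSum_mlIntegral A B hc hd hδ hf ht).add (hasSum_mlIntegral A B hc hd hδ hg ht)
    using 2 with p
  rw [rlIntegral_add (mlExponent_add_pos hc hd hδ p) ht (hf.mono Icc_subset_Ici_self)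
    (hg.mono Icc_subset_Ici_self), map_add]

lemma mlIntegral_const (A B : Y →L[ℝ] Y) (hc : 0 < c) (hd : 0 < d) (hδ : 0 < δ) (y : Y) (t : ℝ) :
    mlIntegral A B c d δ (fun _ => y) t
      = ∑' p, rlKernel (mlExponent c d p + δ + 1) t • mlCoeff A B p y := by
  refine tsum_congr fun p => ?_
  rw [rlIntegral_const (mlExponent_add_pos hc hd hδ p), map_smul]

lemma mlIntegral_eq_integral_tsum (A B : Y →L[ℝ] Y) (hc : 0 < c) (hd : 0 < d) (hδ : 0 < δ)
    (hf : ContinuousOn f (Ici 0)) (ht : 0 ≤ t) :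
    mlIntegral A B c d δ f t = ∫ s in (0 : ℝ)..t,
      ∑' p, rlKernel (mlExponent c d p + δ) (t - s) • mlCoeff A B p (f s) := by
  have hft : ContinuousOn f (Icc 0 t) := hf.mono Icc_subset_Ici_self
  obtain ⟨M, hM⟩ := isCompact_Icc.exists_bound_of_continuousOn hft
  have hsum : Summable fun p =>
      rlKernel (mlExponent c d p + δ + 1) t * (mlCoeff ‖A‖ ‖B‖ p * M) := by
    simpa only [mul_left_comm, mul_assoc] using
      (summable_mlCoeff_mul_rlKernel (norm_nonneg A) (norm_nonneg B) hc hd hδ.le ht).mul_right M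
  refine (tsum_congr fun p => ?_).trans (hasSum_rlIntegral (mlExponent_add_pos hc hd hδ) ht
    (fun p => (mlCoeff A B p).continuous.comp_continuousOn hft)
    (fun p s hs => (norm_mlCoeff_apply_le A B p _).trans (mul_le_mul_of_nonneg_left (hM s hs)
      (mlCoeff_nonneg (norm_nonneg A) (norm_nonneg B) p))) hsum).tsum_eq
  exact (rlIntegral_clm (mlExponent_add_pos hc hd hδ p) ht hft _).symm

theorem rlIntegral_mlIntegral (A B : Y →L[ℝ] Y) (hc : 0 < c) (hd : 0 < d) (hγ : 0 < γ)
    (hδ : 0 < δ) (hf : ContinuousOn f (Ici 0)) (ht : 0 ≤ t) :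
    rlIntegral γ (mlIntegral A B c d δ f) t = mlIntegral A B c d (γ + δ) f t := by
  obtain ⟨b, hb, hfb⟩ := exists_summable_norm_mlCoeff_rlIntegral_le A B hc hd hδ hf ht
  have hcont (p : ℕ × ℕ) : ContinuousOn (rlIntegral (mlExponent c d p + δ) f) (Ici 0) :=
    continuousOn_rlIntegral (mlExponent_add_pos hc hd hδ p) hf
  have hsum := hasSum_rlIntegral (fun _ => hγ) ht (fun p =>
    (mlCoeff A B p).continuous.comp_continuousOn ((hcont p).mono Icc_subset_Ici_self)) hfb
    (hb.mul_left _)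
  simp only [tsum_const_smul''] at hsum
  refine hsum.tsum_eq.symm.trans (tsum_congr fun p => ?_)
  rw [rlIntegral_clm hγ ht ((hcont p).mono Icc_subset_Ici_self),
    rlIntegral_rlIntegral hγ (mlExponent_add_pos hc hd hδ p) hf ht, add_left_comm]

theorem mlIntegral_eq_rlIntegral_add (hAB : Commute A B) (hc : 0 < c) (hd : 0 < d) (hδ : 0 < δ)
    (hf : ContinuousOn f (Ici 0)) (ht : 0 ≤ t) :
    mlIntegral A B c d δ f t = rlIntegral δ f t + A (mlIntegral A B c d (c + δ) f t)
      + B (mlIntegral A B c d (d + δ) f t) := by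
  have hA := hasSum_mlIntegral A B hc hd (add_pos hc hδ) hf ht
  have hB := hasSum_mlIntegral A B hc hd (add_pos hd hδ) hf ht
  have hsum := hasSum_mlCoeff_apply (z := fun p => rlIntegral (mlExponent c d p + δ) f t) hAB
    (a := mlIntegral A B c d (c + δ) f t) (b := mlIntegral A B c d (d + δ) f t)
    (by simpa only [mlExponent_succ_fst_add] using hA)
    (by simpa only [mlExponent_succ_snd_add] using hB)
  simpa [mlExponent] using (hasSum_mlIntegral A B hc hd hδ hf ht).unique hsum

theorem mlIntegral_add_eq_rlIntegral_add_rlIntegral {β : ℝ} (hAB : Commute A B) (hβ : 0 < β)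
    (hc : 0 < d - β) (hd : 0 < d) (hδ : 0 < δ) (hf : ContinuousOn f (Ici 0)) (ht : 0 ≤ t) :
    mlIntegral A B (d - β) d (β + δ) f t = rlIntegral (β + δ) f t
      + rlIntegral d (A ∘ mlIntegral A B (d - β) d δ f + B ∘ mlIntegral A B (d - β) d (β + δ) f)
        t := by
  have hcont {ε : ℝ} (hε : 0 < ε) : ContinuousOn (mlIntegral A B (d - β) d ε f) (Icc 0 t) :=
    (continuousOn_mlIntegral A B hc hd hε hf).mono Icc_subset_Ici_self
  have hβδ : 0 < β + δ := add_pos hβ hδ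
  rw [rlIntegral_add hd ht (A.continuous.comp_continuousOn (hcont hδ))
      (B.continuous.comp_continuousOn (hcont hβδ)),
    rlIntegral_clm hd ht (hcont hδ), rlIntegral_clm hd ht (hcont hβδ),
    rlIntegral_mlIntegral A B hc hd hd hδ hf ht, rlIntegral_mlIntegral A B hc hd hd hβδ hf ht,
    mlIntegral_eq_rlIntegral_add hAB hc hd hβδ hf ht, ← add_assoc (d - β) β δ, sub_add_cancel,
    add_assoc]

end OperatorSeries

end MittagLeffler

section MildSolution

open Set

variable {Y : Type*} [NormedAddCommGroup Y] [NormedSpace ℝ Y] [CompleteSpace Y]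

/-- The operator-series candidate for the Caputo derivative of order `γ` of the mild solution with
initial velocity `y` and forcing `f`; the order `γ = 0` gives the displacement of the solution from
its initial value. -/
noncomputable def mildCaputo (A B : Y →L[ℝ] Y) (α β γ : ℝ) (y : Y) (f : ℝ → Y) : ℝ → Y :=
  mlIntegral A B (α - β) α (1 - γ) (fun _ => y) + mlIntegral A B (α - β) α (α - γ) f

variable {A B : Y →L[ℝ] Y} {α β γ t : ℝ} {f : ℝ → Y}

lemma continuousOn_mildCaputo (A B : Y →L[ℝ] Y) (hα : 0 < α) (hβα : β < α) (hγ1 : γ < 1)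
    (hγα : γ < α) (y : Y) (hf : ContinuousOn f (Ici 0)) :
    ContinuousOn (mildCaputo A B α β γ y f) (Ici 0) :=
  (continuousOn_mlIntegral A B (sub_pos.2 hβα) hα (sub_pos.2 hγ1) continuousOn_const).add
    (continuousOn_mlIntegral A B (sub_pos.2 hβα) hα (sub_pos.2 hγα) hf)

lemma rlIntegral_mildCaputo (A B : Y →L[ℝ] Y) (hβα : β < α) (hγ0 : 0 < γ) (hγ1 : γ < 1)
    (hγα : γ < α) (y : Y) (hf : ContinuousOn f (Ici 0)) (ht : 0 ≤ t) :
    rlIntegral γ (mildCaputo A B α β γ y f) t = mildCaputo A B α β 0 y f t := by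
  have hα : 0 < α := hγ0.trans hγα
  have hc : 0 < α - β := sub_pos.2 hβα
  have hγ1' : 0 < 1 - γ := sub_pos.2 hγ1
  have hγα' : 0 < α - γ := sub_pos.2 hγα
  have hy : ContinuousOn (fun _ : ℝ => y) (Ici 0) := continuousOn_const
  rw [mildCaputo, rlIntegral_add hγ0 ht
      ((continuousOn_mlIntegral A B hc hα hγ1' hy).mono Icc_subset_Ici_self)
      ((continuousOn_mlIntegral A B hc hα hγα' hf).mono Icc_subset_Ici_self),
    rlIntegral_mlIntegral A B hc hα hγ0 hγ1' hy ht, rlIntegral_mlIntegral A B hc hα hγ0 hγα' hf ht,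
    add_sub_cancel, add_sub_cancel, mildCaputo, sub_zero, sub_zero, Pi.add_apply]

theorem mildCaputo_zero_sub_smul (hAB : Commute A B) (hβ0 : 0 < β) (hβ1 : β < 1) (hβα : β < α)
    (y : Y) (hf : ContinuousOn f (Ici 0)) (ht : 0 ≤ t) :
    mildCaputo A B α β 0 y f t - t • y
      = rlIntegral α (A ∘ mildCaputo A B α β β y f + B ∘ mildCaputo A B α β 0 y f + f) t := by
  have hα : 0 < α := hβ0.trans hβα
  have hc : 0 < α - β := sub_pos.2 hβα
  let G (δ : ℝ) (h : ℝ → Y) : ℝ → Y :=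
    A ∘ mlIntegral A B (α - β) α δ h + B ∘ mlIntegral A B (α - β) α (β + δ) h
  have hG {δ : ℝ} (hδ : 0 < δ) {h : ℝ → Y} (hh : ContinuousOn h (Ici 0)) :
      ContinuousOn (G δ h) (Icc 0 t) :=
    ((A.continuous.comp_continuousOn (continuousOn_mlIntegral A B hc hα hδ hh)).add
      (B.continuous.comp_continuousOn (continuousOn_mlIntegral A B hc hα (add_pos hβ0 hδ) hh))).mono
        Icc_subset_Ici_self
  have hVolterra {δ : ℝ} (hδ : 0 < δ) {h : ℝ → Y} (hh : ContinuousOn h (Ici 0)) :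
      mlIntegral A B (α - β) α (β + δ) h t = rlIntegral (β + δ) h t + rlIntegral α (G δ h) t :=
    mlIntegral_add_eq_rlIntegral_add_rlIntegral hAB hβ0 hc hα hδ hh ht
  have hy := hVolterra (sub_pos.2 hβ1) (continuousOn_const (c := y))
  have hf' := hVolterra hc hf
  have hlin : rlIntegral 1 (fun _ => y) t = t • y := by simp
  have hsplit : A ∘ mildCaputo A B α β β y f + B ∘ mildCaputo A B α β 0 y f + f
      = G (1 - β) (fun _ => y) + G (α - β) f + f := by
    ext s
    simp only [mildCaputo, G, Pi.add_apply, Function.comp_apply, map_add, add_sub_cancel, sub_zero]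
    abel
  have hGy := hG (sub_pos.2 hβ1) (continuousOn_const (c := y))
  rw [add_sub_cancel] at hy hf'
  rw [hsplit, rlIntegral_add hα ht (hGy.add (hG hc hf)) (hf.mono Icc_subset_Ici_self),
    rlIntegral_add hα ht hGy (hG hc hf), mildCaputo, Pi.add_apply, sub_zero, sub_zero, hy, hf',
    hlin]
  abel

theorem exists_rlIntegral_eq_of_mild (hAB : Commute A B) (hβ0 : 0 < β) (hβ1 : β < 1)
    (hβα : β < α) {η ηh : Y} {g x : ℝ → Y} (hg : ContinuousOn g (Ici 0))
    (hx : ∀ t, 0 ≤ t → x t = η + mlIntegral A B (α - β) α α (fun _ => B η) t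
      + mlIntegral A B (α - β) α 1 (fun _ => ηh) t + mlIntegral A B (α - β) α α g t) :
    ∃ v w : ℝ → Y, ContinuousOn v (Ici 0) ∧ ContinuousOn w (Ici 0) ∧
      EqOn (fun t => x t - η) (rlIntegral β v) (Ici 0) ∧
      EqOn (fun t => x t - η - t • ηh) (rlIntegral α w) (Ici 0) ∧
      ∀ t, 0 ≤ t → w t - A (v t) = B (x t) + g t := by
  have hα : 0 < α := hβ0.trans hβα
  let f : ℝ → Y := (fun _ => B η) + g
  have hf : ContinuousOn f (Ici 0) := continuousOn_const.add hg
  let v := mildCaputo A B α β β ηh f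
  let u := mildCaputo A B α β 0 ηh f
  have hv : ContinuousOn v (Ici 0) := continuousOn_mildCaputo A B hα hβα hβ1 hβα ηh hf
  have hu : ContinuousOn u (Ici 0) := continuousOn_mildCaputo A B hα hβα one_pos hα ηh hf
  have hxu {t : ℝ} (ht : 0 ≤ t) : x t - η = u t := by
    have hSf := mlIntegral_add A B (sub_pos.2 hβα) hα hα (continuousOn_const (c := B η)) hg ht
    simp only [u, f, mildCaputo, Pi.add_apply, sub_zero, hSf, hx t ht]
    abel
  refine ⟨v, A ∘ v + B ∘ u + f, hv, ((A.continuous.comp_continuousOn hv).add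
    (B.continuous.comp_continuousOn hu)).add hf, fun t ht => (hxu ht).trans
    (rlIntegral_mildCaputo A B hβα hβ0 hβ1 hβα ηh hf ht).symm, fun t ht => ?_, fun t ht => ?_⟩
  · simp only [hxu ht, u, v, mildCaputo_zero_sub_smul hAB hβ0 hβ1 hβα ηh hf ht]
  · simp only [f, Pi.add_apply, Function.comp_apply, ← hxu ht, map_sub]
    abel

end MildSolution

/-- The mild solution of the inhomogeneous multi-term fractional evolution equation with
permutable operators (`AB = BA`), expressed through bivariate Mittag-Leffler type series with
binomial coefficients, satisfies `x(0) = η`, `x'(0) = η̂`, its Caputo derivatives of orders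
`α ∈ (1,2)` and `β ∈ (0,1)` exist for `t > 0`, and
`(ᶜD^α x)(t) − A (ᶜD^β x)(t) = B x(t) + g(t)`. -/
theorem inhomogeneous_mild_solution_permutable {Y : Type*} [NormedAddCommGroup Y]
    [NormedSpace ℝ Y] [CompleteSpace Y] (A B : Y →L[ℝ] Y)
    (hAB : A * B = B * A) (α β : ℝ)
    (hα1 : 1 < α) (hα2 : α < 2) (hβ0 : 0 < β) (hβ1 : β < 1) (η ηh : Y)
    (g : ℝ → Y) (hg : ContinuousOn g (Set.Ici 0)) (x : ℝ → Y)
    (hx : ∀ t : ℝ, 0 ≤ t → x t = η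
      + (∑' p : ℕ × ℕ, (((p.1 + p.2).choose p.2 : ℝ) *
          t ^ ((p.1 : ℝ) * (α - β) + (p.2 : ℝ) * α + α) /
          Real.Gamma ((p.1 : ℝ) * (α - β) + (p.2 : ℝ) * α + α + 1)) •
            ((A ^ p.1 * B ^ (p.2 + 1)) η))
      + (∑' p : ℕ × ℕ, (((p.1 + p.2).choose p.2 : ℝ) *
          t ^ ((p.1 : ℝ) * (α - β) + (p.2 : ℝ) * α + 1) /
          Real.Gamma ((p.1 : ℝ) * (α - β) + (p.2 : ℝ) * α + 2)) •
            ((A ^ p.1 * B ^ p.2) ηh))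
      + ∫ s in (0:ℝ)..t,
          (∑' p : ℕ × ℕ, (((p.1 + p.2).choose p.2 : ℝ) *
            (t - s) ^ ((p.1 : ℝ) * (α - β) + (p.2 : ℝ) * α + α - 1) /
            Real.Gamma ((p.1 : ℝ) * (α - β) + (p.2 : ℝ) * α + α)) •
              ((A ^ p.1 * B ^ p.2) (g s)))) :
    x 0 = η ∧
    HasDerivWithinAt x ηh (Set.Ici 0) 0 ∧
    ∃ Iα' Dα Dβ : ℝ → Y,
      (∀ t : ℝ, 0 < t → HasDerivWithinAt
        (fun τ => (Real.Gamma (2 - α))⁻¹ •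
          ∫ s in (0:ℝ)..τ, ((τ - s) ^ (1 - α)) • (x s - η - s • ηh))
        (Iα' t) (Set.Ici 0) t) ∧
      (∀ t : ℝ, 0 < t → HasDerivWithinAt Iα' (Dα t) (Set.Ici 0) t) ∧
      (∀ t : ℝ, 0 < t → HasDerivWithinAt
        (fun τ => (Real.Gamma (1 - β))⁻¹ •
          ∫ s in (0:ℝ)..τ, ((τ - s) ^ (-β)) • (x s - η))
        (Dβ t) (Set.Ici 0) t) ∧
      (∀ t : ℝ, 0 < t → Dα t - A (Dβ t) = B (x t) + g t) := by
  have hα : 0 < α := one_pos.trans hα1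
  have hβα : β < α := hβ1.trans hα1
  have hc : 0 < α - β := sub_pos.2 hβα
  have hmild (t : ℝ) (ht : 0 ≤ t) :
      x t = η + mlIntegral A B (α - β) α α (fun _ => B η) t
        + mlIntegral A B (α - β) α 1 (fun _ => ηh) t + mlIntegral A B (α - β) α α g t := by
    rw [hx t ht, mlIntegral_const A B hc hα hα, mlIntegral_const A B hc hα one_pos,
      mlIntegral_eq_integral_tsum A B hc hα hα hg ht]
    simp only [rlKernel_smul_mlCoeff_apply, add_sub_cancel_right, mlExponent]
    simp [pow_succ, add_assoc, one_add_one_eq_two]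
  obtain ⟨v, w, hv, hw, hxv, hxw, heq⟩ := exists_rlIntegral_eq_of_mild hAB hβ0 hβ1 hβα hg hmild
  refine ⟨by simpa [sub_eq_zero] using hxv Set.self_mem_Ici,
    hasDerivWithinAt_zero_of_eqOn_rlIntegral hα1 hw hxw, rlIntegral 1 w, w, v,
    fun t ht => hasDerivWithinAt_caputo_of_lt_two hα hα2 hw hxw ht.le,
    fun t ht => hasDerivWithinAt_rlIntegral_one hw ht.le,
    fun t ht => hasDerivWithinAt_caputo_of_lt_one hβ0 hβ1 hv hxv ht.le,
    fun t ht => heq t ht.le⟩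
end
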